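/- arXiv:2110.01087 — 5 statements merged into one kernel-verified Lean document; each statement's English description precedes it below -/
import Mathlib

section
/- If T is a finite tree (a connected acyclic simple graph) of order n ≥ 1, then the burning number of T satisfies b(T) ≤ ⌈(√(12n + 64) + 8)/3⌉. -/
/-- The burning number of a finite simple graph `G`: the least positive integer `k`
for which there exist sources `x 0, x 1, …, x (k-1)` (indexed by `Fin k`, the `i`-th
source burning a ball of radius `k - 1 - i`) such that every vertex `v` satisfies
`dist (x i) v ≤ k - 1 - i` for some `i`. -/
noncomputable def burningNumber {V : Type*} [Fintype V] (G : SimpleGraph V) : ℕ :=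
  sInf {k : ℕ | 0 < k ∧ ∃ x : Fin k → V, ∀ v : V, ∃ i : Fin k,
    G.dist (x i) v ≤ k - 1 - (i : ℕ)}

structure RTree (V : Type*) where
  d : V → V → ℕ
  rt : V
  symm : ∀ a b, d a b = d b a
  tri : ∀ a b c, d a c ≤ d a b + d b c
  self : ∀ a, d a a = 0
  eq0 : ∀ a b, d a b = 0 → a = b
  interp : ∀ a b i, i ≤ d a b → ∃ u, d a u = i ∧ d a u + d u b = d a b
  sep : ∀ v u y, d rt v + d v u = d rt u → d rt v + d v y ≠ d rt y →
    d y u = d y v + d v u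

namespace RTree

variable {V : Type*} (M : RTree V)

def anc (a v : V) : Prop := M.d M.rt a + M.d a v = M.d M.rt v

theorem anc_refl (a : V) : M.anc a a := by simp [anc, M.self]

theorem anc_root (a : V) : M.anc M.rt a := by simp [anc, M.self]

theorem anc_trans {a b c : V} (h1 : M.anc a b) (h2 : M.anc b c) : M.anc a c := by
  unfold anc at *
  have := M.tri a b c
  have := M.tri M.rt a c
  omega

theorem anc_d {a b c : V} (h1 : M.anc a b) (h2 : M.anc b c) :
    M.d a c = M.d a b + M.d b c := by
  have h3 := M.anc_trans h1 h2
  unfold anc at *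
  omega

theorem anc_between {a b u : V} (h : M.anc a b) (hu : M.d a u + M.d u b = M.d a b) :
    M.anc a u ∧ M.anc u b := by
  unfold anc at *
  have := M.tri M.rt a u
  have := M.tri M.rt u b
  omega

theorem anc_interp {a b : V} (h : M.anc a b) (i : ℕ) (hi : i ≤ M.d a b) :
    ∃ u, M.anc a u ∧ M.anc u b ∧ M.d a u = i := by
  obtain ⟨u, h1, h2⟩ := M.interp a b i hi
  obtain ⟨h3, h4⟩ := M.anc_between h h2
  exact ⟨u, h3, h4, h1⟩

theorem chain {u x y : V} (hu : M.anc u y) (hx : M.anc x y) : M.anc u x ∨ M.anc x u := by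
  by_contra hc
  push Not at hc
  have h1 := M.sep x y u hx hc.2
  have h2 := M.sep u y x hu hc.1
  have h3 : M.d u x = 0 := by omega
  have := M.eq0 _ _ h3
  subst this
  exact hc.1 (M.anc_refl _)

def Closed (S : Finset V) : Prop := ∀ v ∈ S, ∀ a, M.anc a v → a ∈ S

def Cov (S : Finset V) (R : Finset ℕ) : Prop :=
  ∃ x : ℕ → V, ∀ v ∈ S, ∃ r ∈ R, M.d (x r) v ≤ r

open Classical in
noncomputable def sub (S : Finset V) (c : V) : Finset V := S.filter (fun v => M.anc c v)

theorem mem_sub {S : Finset V} {c v : V} : v ∈ M.sub S c ↔ v ∈ S ∧ M.anc c v := by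
  simp [sub]

open Classical in
theorem closed_sdiff {S : Finset V} (hS : M.Closed S) (c : V) : M.Closed (S \ M.sub S c) := by
  intro v hv a ha
  simp only [Finset.mem_sdiff, mem_sub, not_and] at hv ⊢
  refine ⟨hS v hv.1 a ha, fun _ hca => hv.2 hv.1 (M.anc_trans hca ha)⟩

open Classical in
theorem cov_step {S A : Finset V} {R : Finset ℕ} {p : ℕ} (hp : p ∈ R) (c : V)
    (hA : ∀ y ∈ A, M.d c y ≤ p) (h : M.Cov (S \ A) (R.erase p)) : M.Cov S R := by
  obtain ⟨x, hx⟩ := h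
  refine ⟨Function.update x p c, fun v hv => ?_⟩
  by_cases hvA : v ∈ A
  · exact ⟨p, hp, by simpa using hA v hvA⟩
  · obtain ⟨r, hr, hd⟩ := hx v (by simp [hv, hvA])
    rw [Finset.mem_erase] at hr
    exact ⟨r, hr.2, by simpa [Function.update_of_ne hr.1] using hd⟩

open Classical in
/-- a path from `a` down to `y`, inside `S` -/
theorem path_card {S : Finset V} (hS : M.Closed S) {a y : V} (hy : y ∈ S) (h : M.anc a y) :
    M.d a y ≤ (S.filter (fun u => M.anc a u ∧ M.anc u y ∧ u ≠ a)).card := by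
  have h1 : Finset.Icc 1 (M.d a y) ⊆
      (S.filter (fun u => M.anc a u ∧ M.anc u y ∧ u ≠ a)).image (fun u => M.d a u) := by
    intro i hi
    rw [Finset.mem_Icc] at hi
    obtain ⟨u, h1, h2, h3⟩ := M.anc_interp h i hi.2
    rw [Finset.mem_image]
    refine ⟨u, ?_, h3⟩
    rw [Finset.mem_filter]
    refine ⟨hS y hy u h2, h1, h2, ?_⟩
    rintro rfl
    rw [M.self] at h3
    omega
  have h2 := Finset.card_le_card h1
  have h3 := Finset.card_image_le (s := S.filter (fun u => M.anc a u ∧ M.anc u y ∧ u ≠ a))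
    (f := fun u => M.d a u)
  rw [Nat.card_Icc] at h2
  omega

open Classical in
theorem height_le {S : Finset V} (hS : M.Closed S) {w c y : V} (hy : y ∈ S)
    (hwc : M.anc w c) (h1 : M.d w c = 1) (h : M.anc c y) :
    M.d w y ≤ (M.sub S c).card := by
  refine (M.path_card hS hy (M.anc_trans hwc h)).trans (Finset.card_le_card ?_)
  intro u hu
  simp only [Finset.mem_filter] at hu
  obtain ⟨h2, h3, h4, h5⟩ := hu
  rw [mem_sub]
  refine ⟨h2, ?_⟩
  rcases M.chain h4 h with h6 | h6
  · have h7 := M.anc_d h3 h6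
    by_cases h8 : M.d w u = 0
    · exact absurd (M.eq0 _ _ h8).symm h5
    · have h9 : M.d u c = 0 := by omega
      have := M.eq0 _ _ h9
      subst this
      exact M.anc_refl _
  · exact h6

open Classical in
/-- second ball -/
theorem second_ball {S : Finset V} (hS : M.Closed S) {w c2 y v : V} {p q H H2 n1 : ℕ}
    (hy : y ∈ S) (hwc : M.anc w c2) (h1 : M.d w c2 = 1) (hc2 : M.anc c2 y)
    (hH2 : M.d w y = H2) (hmax : ∀ z ∈ M.sub S c2, M.d w z ≤ H2)
    (hv : M.d v w + p ≤ H) (hn1 : H ≤ n1) (hHH : 2 * p + 1 ≤ H + H2)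
    (hN : n1 + (M.sub S c2).card ≤ 2 * p + q + 1) :
    ∃ x, ∀ z ∈ M.sub S c2, M.d v z ≤ p ∨ M.d x z ≤ q := by
  by_cases hq : H2 ≤ q
  · exact ⟨w, fun z hz => Or.inr ((hmax z hz).trans hq)⟩
  push Not at hq
  obtain ⟨x, hwx, hxy, hx⟩ := M.anc_interp (M.anc_trans hwc hc2) (H2 - q) (by omega)
  refine ⟨x, fun z hz => ?_⟩
  by_contra hc
  push Not at hc
  obtain ⟨hc1, hc3⟩ := hc
  have hzS := (M.mem_sub.1 hz).1
  have hcz := (M.mem_sub.1 hz).2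
  have hxz : ¬ M.anc x z := by
    intro h
    have := M.anc_d hwx h
    have := hmax z hz
    omega
  -- deepest common ancestor
  obtain ⟨a, ha, hamax⟩ := Finset.exists_max_image
    (S.filter (fun u => M.anc u y ∧ M.anc u z)) (fun u => M.d M.rt u)
    ⟨c2, by simp [hc2, hcz, hS y hy c2 hc2]⟩
  simp only [Finset.mem_filter] at ha hamax
  obtain ⟨haS, hay, haz⟩ := ha
  have hc2a : M.anc c2 a := by
    rcases M.chain hc2 hay with h | h
    · exact h
    · have h2 := hamax c2 ⟨hS y hy c2 hc2, hc2, hcz⟩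
      have h3 : M.d a c2 = 0 := by
        unfold anc at h
        omega
      have := M.eq0 _ _ h3
      subst this
      exact M.anc_refl _
  have hax : M.anc a x := by
    rcases M.chain hay hxy with h | h
    · exact h
    · exact absurd (M.anc_trans h haz) hxz
  have hwa := M.anc_trans hwc hc2a
  have e1 := M.anc_d hwa hax
  have e2 := M.tri v w z
  have e3 := M.tri w a z
  have e4 := M.tri x a z
  have e5 := M.symm x a
  have k1 := M.path_card hS hzS haz
  have k2 := M.path_card hS hy (M.anc_trans hwc hc2)
  have hdisj : Disjoint (S.filter (fun u => M.anc a u ∧ M.anc u z ∧ u ≠ a))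
      (S.filter (fun u => M.anc w u ∧ M.anc u y ∧ u ≠ w)) := by
    rw [Finset.disjoint_left]
    intro u hu hu'
    simp only [Finset.mem_filter] at hu hu'
    have h2 := hamax u ⟨hu.1, hu'.2.2.1, hu.2.2.1⟩
    have h3 := hu.2.1
    unfold anc at h3
    have h4 : M.d a u = 0 := by omega
    exact hu.2.2.2 (M.eq0 _ _ h4).symm
  have hsub : (S.filter (fun u => M.anc a u ∧ M.anc u z ∧ u ≠ a)) ∪
      (S.filter (fun u => M.anc w u ∧ M.anc u y ∧ u ≠ w)) ⊆ M.sub S c2 := by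
    intro u hu
    rw [Finset.mem_union] at hu
    simp only [Finset.mem_filter] at hu
    rw [mem_sub]
    rcases hu with hu | ⟨hu1, hu2, hu3, hu4⟩
    · exact ⟨hu.1, M.anc_trans hc2a hu.2.1⟩
    · refine ⟨hu1, ?_⟩
      rcases M.chain hu3 hc2 with h6 | h6
      · have h7 := M.anc_d hu2 h6
        by_cases h8 : M.d w u = 0
        · exact absurd (M.eq0 _ _ h8).symm hu4
        · have h9 : M.d u c2 = 0 := by omega
          have := M.eq0 _ _ h9
          subst this
          exact M.anc_refl _
      · exact h6
  have k3 := Finset.card_le_card hsub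
  rw [Finset.card_union_of_disjoint hdisj] at k3
  omega

open Classical in
theorem main (m : ℕ) : ∀ (R : Finset ℕ) (S : Finset V), R.card = m → M.rt ∈ S → M.Closed S →
    4 * S.card + 14 * m ≤ 4 * (∑ r ∈ R, r) + m * m → M.Cov S R := by
  induction m using Nat.strong_induction_on with
  | _ m ih =>
  intro R S hR hrt hS hcard
  have hSpos : 0 < S.card := Finset.card_pos.2 ⟨_, hrt⟩
  have hRne : R.Nonempty := by
    rw [Finset.nonempty_iff_ne_empty]
    rintro rfl
    simp at hR
    subst hR
    rw [Finset.sum_empty] at hcard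
    omega
  obtain ⟨p, hpR, hpmax⟩ := Finset.exists_max_image R id hRne
  simp only [id] at hpmax
  have hmpos : 0 < m := hR ▸ Finset.card_pos.2 hRne
  have hmp : m ≤ p + 1 := by
    have : R ⊆ Finset.range (p + 1) := fun r hr => by
      have := hpmax r hr
      simp; omega
    have := Finset.card_le_card this
    simp at this; omega
  have hsum := Finset.add_sum_erase R (fun r => r) hpR
  have hRe : (R.erase p).card = m - 1 := by rw [Finset.card_erase_of_mem hpR, hR]
  by_cases hall : ∀ w ∈ S, ∃ x, ∀ y ∈ M.sub S w, M.d x y ≤ p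
  · obtain ⟨x, hx⟩ := hall _ hrt
    exact ⟨fun _ => x, fun v hv => ⟨p, hpR, hx v (M.mem_sub.2 ⟨hv, M.anc_root v⟩)⟩⟩
  push Not at hall
  obtain ⟨w0, hw0S, hw0⟩ := hall
  obtain ⟨w, hw, hwmax⟩ := Finset.exists_max_image
    (S.filter (fun w => ¬ ∃ x, ∀ y ∈ M.sub S w, M.d x y ≤ p)) (fun u => M.d M.rt u)
    ⟨w0, by simp only [Finset.mem_filter]; exact ⟨hw0S, by push Not; exact hw0⟩⟩
  simp only [Finset.mem_filter] at hw hwmax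
  obtain ⟨hwS, hw⟩ := hw
  have hchild : ∀ c ∈ S, M.anc w c → M.d w c = 1 → ∃ x, ∀ y ∈ M.sub S c, M.d x y ≤ p := by
    intro c hcS hwc hc1
    by_contra hcon
    have := hwmax c ⟨hcS, hcon⟩
    unfold anc at hwc
    omega
  -- single step
  have single : ∀ c ∈ S, M.anc w c → M.d w c = 1 →
      4 * p + 2 * m ≤ 4 * (M.sub S c).card + 15 → M.Cov S R := by
    intro c hcS hwc hc1 hbig
    obtain ⟨x, hx⟩ := hchild c hcS hwc hc1
    refine M.cov_step hpR x hx (ih (m - 1) (by omega) _ _ hRe ?_ (M.closed_sdiff hS c) ?_)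
    · rw [Finset.mem_sdiff]
      refine ⟨hrt, fun h => ?_⟩
      have := (M.mem_sub.1 h).2
      unfold anc at this hwc
      have h0 := M.self M.rt
      omega
    · have h1 : (S \ M.sub S c).card = S.card - (M.sub S c).card :=
        Finset.card_sdiff_of_subset (Finset.filter_subset _ _)
      have h2 : (M.sub S c).card ≤ S.card := Finset.card_le_card (Finset.filter_subset _ _)
      obtain ⟨m', rfl⟩ : ∃ m', m = m' + 1 := ⟨m - 1, by omega⟩
      simp only [Nat.add_sub_cancel]
      have : (m' + 1) * (m' + 1) = m' * m' + 2 * m' + 1 := by ring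
      omega
  by_contra hnc
  have small : ∀ c ∈ S, M.anc w c → M.d w c = 1 → 4 * (M.sub S c).card + 15 < 4 * p + 2 * m := by
    intro c h1 h2 h3
    by_contra h4
    exact hnc (single c h1 h2 h3 (by omega))
  -- deepest leaf
  obtain ⟨l, hl, hlmax⟩ := Finset.exists_max_image (M.sub S w) (fun u => M.d w u)
    ⟨w, M.mem_sub.2 ⟨hwS, M.anc_refl w⟩⟩
  have hlS := (M.mem_sub.1 hl).1
  have hwl := (M.mem_sub.1 hl).2
  obtain ⟨H, hH⟩ : ∃ H, H = M.d w l := ⟨_, rfl⟩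
  have hHp : p + 1 ≤ H := by
    by_contra hcon
    exact hw ⟨w, fun y hy => (hlmax y hy).trans (by omega)⟩
  obtain ⟨c1, hwc1, hc1l, hc1⟩ := M.anc_interp hwl 1 (by omega)
  have hc1S := hS l hlS c1 hc1l
  have hH1 := M.height_le hS hlS hwc1 hc1 hc1l
  have hs1 := small c1 hc1S hwc1 hc1
  have hdc1 := M.anc_d hwc1 hc1l
  obtain ⟨v, hc1v, hvl, hv⟩ := M.anc_interp hc1l (H - 1 - p) (by omega)
  have hdv := M.anc_d hc1v hvl
  have hwv := M.anc_d hwc1 hc1v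
  have hball1 : ∀ y ∈ M.sub S c1, M.d v y ≤ p := by
    intro y hy
    have hyS := (M.mem_sub.1 hy).1
    have hcy := (M.mem_sub.1 hy).2
    by_cases hvy : M.anc v y
    · have h1 := M.anc_d (M.anc_trans hwc1 hc1v) hvy
      have h2 := hlmax y (M.mem_sub.2 ⟨hyS, M.anc_trans hwc1 hcy⟩)
      omega
    · have h1 := M.sep v l y hvl hvy
      obtain ⟨x, hx⟩ := hchild c1 hc1S hwc1 hc1
      have h2 := hx y hy
      have h3 := hx l (M.mem_sub.2 ⟨hlS, hc1l⟩)
      have h4 := M.tri y x l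
      have h5 := M.symm y x
      have h6 := M.symm y v
      omega
  have hex : ∃ y ∈ M.sub S w, p < M.d v y := by
    by_contra hcon
    push Not at hcon
    exact hw ⟨v, hcon⟩
  obtain ⟨y0, hy0, hy0p⟩ := hex
  have hy0c : ¬ M.anc c1 y0 := fun h => by
    have := hball1 y0 (M.mem_sub.2 ⟨(M.mem_sub.1 hy0).1, h⟩)
    omega
  obtain ⟨y, hy, hymax⟩ := Finset.exists_max_image ((M.sub S w).filter (fun u => ¬ M.anc c1 u))
    (fun u => M.d w u) ⟨y0, by rw [Finset.mem_filter]; exact ⟨hy0, hy0c⟩⟩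
  simp only [Finset.mem_filter] at hy hymax
  obtain ⟨hyw, hyc1⟩ := hy
  have hyS := (M.mem_sub.1 hyw).1
  have hwy := (M.mem_sub.1 hyw).2
  obtain ⟨H2, hH2⟩ : ∃ H2, H2 = M.d w y := ⟨_, rfl⟩
  have hHH : 2 * p + 1 ≤ H + H2 := by
    have h1 := hymax y0 ⟨hy0, hy0c⟩
    have h2 := M.tri v w y0
    have h3 := M.symm v w
    omega
  obtain ⟨c2, hwc2, hc2y, hc2⟩ := M.anc_interp hwy 1 (by omega)
  have hc2S := hS y hyS c2 hc2y
  have hHc2 := M.height_le hS hyS hwc2 hc2 hc2y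
  have hs2 := small c2 hc2S hwc2 hc2
  have hdisj : ∀ z, M.anc c2 z → ¬ M.anc c1 z := by
    intro z h2 h1
    have h3 : M.d c1 c2 = 0 := by
      have h5 := M.symm c1 c2
      rcases M.chain h1 h2 with h4 | h4
      · have := M.anc_d hwc1 h4
        omega
      · have := M.anc_d hwc2 h4
        omega
    have := M.eq0 _ _ h3
    subst this
    exact hyc1 hc2y
  have hmax2 : ∀ z ∈ M.sub S c2, M.d w z ≤ H2 := by
    intro z hz
    have hz' := M.mem_sub.1 hz
    rw [hH2]
    exact hymax z ⟨M.mem_sub.2 ⟨hz'.1, M.anc_trans hwc2 hz'.2⟩, hdisj z hz'.2⟩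
  obtain ⟨n1, hn1⟩ : ∃ n, n = (M.sub S c1).card := ⟨_, rfl⟩
  obtain ⟨n2, hn2⟩ : ∃ n, n = (M.sub S c2).card := ⟨_, rfl⟩
  have hNlow : 2 * p + 1 ≤ n1 + n2 := by omega
  rcases Finset.eq_empty_or_nonempty
    ((R.erase p).filter (fun q => n1 + n2 ≤ 2 * p + q + 1)) with hQ | hQ
  · have hsub : R.erase p ⊆ Finset.range (n1 + n2 - 2 * p - 1) := by
      intro r hr
      have : ¬ (n1 + n2 ≤ 2 * p + r + 1) := by
        intro h
        have : r ∈ (R.erase p).filter (fun q => n1 + n2 ≤ 2 * p + q + 1) := by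
          rw [Finset.mem_filter]; exact ⟨hr, h⟩
        rw [hQ] at this
        simp at this
      rw [Finset.mem_range]
      omega
    have := Finset.card_le_card hsub
    rw [Finset.card_range] at this
    omega
  · obtain ⟨q, hq, hqmin⟩ := Finset.exists_min_image _ id hQ
    simp only [Finset.mem_filter, id] at hq hqmin
    obtain ⟨hqR, hqN⟩ := hq
    have hqR' := Finset.mem_erase.1 hqR
    have hqp := hpmax q hqR'.2
    have hsub : R ⊆ Finset.range (n1 + n2 - 2 * p - 1) ∪ Finset.Icc q p := by
      intro r hr
      rw [Finset.mem_union, Finset.mem_range, Finset.mem_Icc]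
      have h1 := hpmax r hr
      by_cases hrp : r = p
      · right; omega
      · by_cases h : n1 + n2 ≤ 2 * p + r + 1
        · right
          exact ⟨hqmin r ⟨Finset.mem_erase.2 ⟨hrp, hr⟩, h⟩, h1⟩
        · left; omega
    have hmc := (Finset.card_le_card hsub).trans (Finset.card_union_le _ _)
    rw [Finset.card_range, Nat.card_Icc, hR] at hmc
    obtain ⟨x, hx⟩ := M.second_ball hS (v := v) (p := p) (q := q) (H := H) (H2 := H2) (n1 := n1)
      hyS hwc2 hc2 hc2y hH2.symm hmax2 (by rw [M.symm v w]; omega) (by omega) hHH (by omega)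
    apply hnc
    -- the removed sets
    have hA2 : M.sub S c2 ⊆ S := Finset.filter_subset _ _
    have hA1 : M.sub S c1 ⊆ S := Finset.filter_subset _ _
    have hd12 : Disjoint (M.sub S c1) (M.sub S c2) := by
      rw [Finset.disjoint_left]
      intro z h1 h2
      exact hdisj z (M.mem_sub.1 h2).2 (M.mem_sub.1 h1).2
    have hm2 : 2 ≤ m := by
      have := Finset.card_pos.2 ⟨q, hqR⟩
      omega
    have hcl : M.Closed (S \ (M.sub S c1 ∪ M.sub S c2)) := by
      intro u hu a ha
      simp only [Finset.mem_sdiff, Finset.mem_union, mem_sub, not_or, not_and] at hu ⊢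
      exact ⟨hS u hu.1 a ha, fun _ h => hu.2.1 hu.1 (M.anc_trans h ha),
        fun _ h => hu.2.2 hu.1 (M.anc_trans h ha)⟩
    have hroot : M.rt ∈ S \ (M.sub S c1 ∪ M.sub S c2) := by
      simp only [Finset.mem_sdiff, Finset.mem_union, mem_sub, not_or, not_and]
      have h0 := M.self M.rt
      refine ⟨hrt, fun _ h => ?_, fun _ h => ?_⟩
      · unfold anc at h hwc1
        omega
      · unfold anc at h hwc2
        omega
    have hsum2 := Finset.add_sum_erase (R.erase p) (fun r => r) hqR
    have hcs : (S \ (M.sub S c1 ∪ M.sub S c2)).card = S.card - (n1 + n2) := by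
      rw [Finset.card_sdiff_of_subset (Finset.union_subset hA1 hA2),
        Finset.card_union_of_disjoint hd12, hn1, hn2]
    have hle : n1 + n2 ≤ S.card := by
      rw [hn1, hn2, ← Finset.card_union_of_disjoint hd12]
      exact Finset.card_le_card (Finset.union_subset hA1 hA2)
    have hfin : M.Cov (S \ (M.sub S c1 ∪ M.sub S c2)) ((R.erase p).erase q) := by
      refine ih (m - 2) (by omega) _ _ ?_ hroot hcl ?_
      · rw [Finset.card_erase_of_mem hqR, hRe]
        omega
      · rw [hcs]
        obtain ⟨m', rfl⟩ : ∃ m', m = m' + 2 := ⟨m - 2, by omega⟩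
        simp only [Nat.add_sub_cancel]
        have : (m' + 2) * (m' + 2) = m' * m' + 4 * m' + 4 := by ring
        omega
    -- assemble
    obtain ⟨X, hX⟩ := hfin
    refine ⟨Function.update (Function.update X q x) p v, fun u hu => ?_⟩
    by_cases hup : M.d v u ≤ p
    · exact ⟨p, hpR, by simpa using hup⟩
    by_cases huq : M.d x u ≤ q
    · exact ⟨q, hqR'.2, by simpa [Function.update_of_ne hqR'.1] using huq⟩
    obtain ⟨r, hr, hd⟩ := hX u (by
      rw [Finset.mem_sdiff, Finset.mem_union]
      refine ⟨hu, ?_⟩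
      rintro (h | h)
      · exact hup (hball1 u h)
      · rcases hx u h with h | h
        · exact hup h
        · exact huq h)
    simp only [Finset.mem_erase] at hr
    exact ⟨r, hr.2.2, by
      simpa [Function.update_of_ne hr.1, Function.update_of_ne hr.2.1] using hd⟩

end RTree

theorem tree_sep {V : Type*} (T : SimpleGraph V) (hT : T.IsTree) (ρ v u y : V)
    (h1 : T.dist ρ v + T.dist v u = T.dist ρ u) (h2 : T.dist ρ v + T.dist v y ≠ T.dist ρ y) :
    T.dist y u = T.dist y v + T.dist v u := by
  classical
  have key : ∀ {a b : V} (p : T.Walk a b), p.length = T.dist a b → v ∈ p.support →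
      T.dist a v + T.dist v b = T.dist a b := by
    intro a b p hp hv
    have e := congrArg SimpleGraph.Walk.length (p.take_spec hv)
    rw [SimpleGraph.Walk.length_append] at e
    have t1 := SimpleGraph.dist_le (p.takeUntil v hv)
    have t2 := SimpleGraph.dist_le (p.dropUntil v hv)
    have t3 := hT.1.dist_triangle (u := a) (v := v) (w := b)
    omega
  obtain ⟨p, hp⟩ := hT.1.exists_walk_length_eq_dist ρ y
  obtain ⟨q, hq⟩ := hT.1.exists_walk_length_eq_dist y u
  obtain ⟨s, hs⟩ := hT.1.exists_walk_length_eq_dist ρ v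
  obtain ⟨t, ht⟩ := hT.1.exists_walk_length_eq_dist v u
  have hpath : (s.append t).IsPath := by
    apply SimpleGraph.Walk.isPath_of_length_eq_dist
    rw [SimpleGraph.Walk.length_append]
    omega
  have hb : (p.append q).bypass = s.append t := by
    have := (hT.2.subsingleton_path ρ u).elim ⟨_, (p.append q).bypass_isPath⟩ ⟨_, hpath⟩
    exact congrArg Subtype.val this
  have hv : v ∈ (p.append q).support := by
    apply SimpleGraph.Walk.support_bypass_subset_support
    rw [hb]
    simp
  rw [SimpleGraph.Walk.mem_support_append_iff] at hv
  rcases hv with hv | hv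
  · exact absurd (key p hp hv) h2
  · exact (key q hq hv).symm

theorem tree_interp {V : Type*} (T : SimpleGraph V) (hT : T.Connected) (a b : V) (i : ℕ)
    (hi : i ≤ T.dist a b) : ∃ u, T.dist a u = i ∧ T.dist a u + T.dist u b = T.dist a b := by
  obtain ⟨p, hp⟩ := hT.exists_walk_length_eq_dist a b
  have t1 := SimpleGraph.dist_le (p.take i)
  have t2 := SimpleGraph.dist_le (p.drop i)
  have t3 := hT.dist_triangle (u := a) (v := p.getVert i) (w := b)
  rw [SimpleGraph.Walk.take_length] at t1
  rw [SimpleGraph.Walk.drop_length] at t2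
  refine ⟨p.getVert i, ?_, ?_⟩ <;> omega

noncomputable def treeRTree {V : Type*} (T : SimpleGraph V) (hT : T.IsTree) (ρ : V) : RTree V where
  d := T.dist
  rt := ρ
  symm := fun _ _ => SimpleGraph.dist_comm
  tri := fun _ _ _ => hT.1.dist_triangle
  self := fun _ => SimpleGraph.dist_self
  eq0 := fun _ _ h => hT.1.dist_eq_zero_iff.1 h
  interp := tree_interp T hT.1
  sep := tree_sep T hT ρ

/-- **Theorem (Bonato–Kamali).** If `T` is a tree of order `n ≥ 1`, then
`b(T) ≤ ⌈(√(12n + 64) + 8)/3⌉`. -/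
theorem burningNumber_tree_le {V : Type*} [Fintype V] (T : SimpleGraph V)
    (hT : T.IsTree) (n : ℕ) (hn : n = Fintype.card V) (hn1 : 1 ≤ n) :
    burningNumber T ≤ ⌈(Real.sqrt (12 * (n : ℝ) + 64) + 8) / 3⌉₊ := by
  obtain ⟨ρ⟩ := hT.1.nonempty
  obtain ⟨k, hk⟩ : ∃ k, k = ⌈(Real.sqrt (12 * (n : ℝ) + 64) + 8) / 3⌉₊ := ⟨_, rfl⟩
  rw [← hk]
  have h1 : (Real.sqrt (12 * (n : ℝ) + 64) + 8) / 3 ≤ k := by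
    rw [hk]; exact Nat.le_ceil _
  have hs0 := Real.sqrt_nonneg (12 * (n : ℝ) + 64)
  have hsq := Real.sq_sqrt (show (0 : ℝ) ≤ 12 * (n : ℝ) + 64 by positivity)
  have h2 : 4 * (n : ℝ) + 16 * k ≤ 3 * (k * k) := by
    nlinarith
  have h3 : 4 * n + 16 * k ≤ 3 * (k * k) := by exact_mod_cast h2
  have hkpos : 0 < k := by
    rcases Nat.eq_zero_or_pos k with h | h
    · subst h; omega
    · exact h
  have hsum : (∑ r ∈ Finset.range k, r) * 2 + k = k * k := by
    rw [Finset.sum_range_id_mul_two]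
    obtain ⟨j, rfl⟩ : ∃ j, k = j + 1 := ⟨k - 1, by omega⟩
    simp only [Nat.add_sub_cancel]
    ring
  obtain ⟨x, hx⟩ := (treeRTree T hT ρ).main k (Finset.range k) Finset.univ (by simp)
    (by simp) (fun _ _ _ _ => by simp) (by
      rw [Finset.card_univ, ← hn]
      omega)
  apply Nat.sInf_le
  refine ⟨hkpos, fun i => x (k - 1 - i), fun v => ?_⟩
  obtain ⟨r, hr, hd⟩ := hx v (Finset.mem_univ v)
  rw [Finset.mem_range] at hr
  refine ⟨⟨k - 1 - r, by omega⟩, ?_⟩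
  have e : k - 1 - (k - 1 - r) = r := by omega
  simp only [e]
  exact hd
end

section
/- If G is a finite connected simple graph of order n ≥ 1, then the burning number of G satisfies b(G) ≤ ⌈(√(12n + 64) + 8)/3⌉. -/
namespace Burn

structure PTree (V : Type*) where
  par : V → V
  lev : V → ℕ
  root : V
  lev_par : ∀ v, lev (par v) = lev v - 1
  eq_root : ∀ v, lev v = 0 → v = root
  par_root : par root = root

variable {V : Type*} (P : PTree V)

lemma lev_iter (i : ℕ) (u : V) : P.lev (P.par^[i] u) = P.lev u - i := by
  induction i with
  | zero => simp
  | succ i ih => rw [Function.iterate_succ_apply', P.lev_par, ih]; omega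

lemma lev_root : P.lev P.root = 0 := by
  have h := lev_iter P (P.lev P.root) P.root
  have h2 : P.par^[P.lev P.root] P.root = P.root := Function.iterate_fixed P.par_root _
  rw [h2] at h; omega

lemma iter_big (i : ℕ) (u : V) (h : P.lev u ≤ i) : P.par^[i] u = P.root := by
  apply P.eq_root; rw [lev_iter]; omega

def Des (v u : V) : Prop := P.lev v ≤ P.lev u ∧ P.par^[P.lev u - P.lev v] u = v

lemma des_iter (i : ℕ) (u : V) : Des P (P.par^[i] u) u := by
  refine ⟨by rw [lev_iter]; omega, ?_⟩
  rw [lev_iter]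
  by_cases h : i ≤ P.lev u
  · congr 2; omega
  · rw [iter_big P i u (by omega), iter_big P _ u (by omega)]

lemma des_refl (u : V) : Des P u u := des_iter P 0 u

lemma des_root (u : V) : Des P P.root u := by
  rw [← iter_big P (P.lev u) u le_rfl]; exact des_iter P _ u

lemma des_trans {a b c : V} (h1 : Des P a b) (h2 : Des P b c) : Des P a c := by
  rw [← h1.2, ← h2.2, ← Function.iterate_add_apply]; exact des_iter P _ c

lemma des_chain {a b u : V} (h1 : Des P a u) (h2 : Des P b u) (h : P.lev a ≤ P.lev b) :
    Des P a b := by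
  have e : a = P.par^[P.lev b - P.lev a] b := by
    rw [← h1.2]
    conv_rhs => rw [← h2.2]
    have h3 := h2.1
    rw [← Function.iterate_add_apply, lev_iter, lev_iter]
    have h4 := h1.1
    congr 2; omega
  rw [e]; exact des_iter P _ b

lemma des_eq {a b u : V} (h1 : Des P a u) (h2 : Des P b u) (h : P.lev a = P.lev b) : a = b := by
  rw [← h1.2, ← h2.2, h]

lemma des_of_par {w u : V} (h : Des P w (P.par u)) : Des P w u :=
  des_trans P h (des_iter P 1 u)

def Cov (ρ : ℕ) (x u : V) : Prop := ∃ i k, P.par^[i] x = P.par^[k] u ∧ i + k ≤ ρ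

lemma cov_of {ρ : ℕ} {x u a : V} (h1 : Des P a x) (h2 : Des P a u)
    (h : P.lev x + P.lev u ≤ ρ + 2 * P.lev a) : Cov P ρ x u :=
  ⟨_, _, h1.2.trans h2.2.symm, by have := h1.1; have := h2.1; omega⟩

lemma Cov.mono {ρ ρ' : ℕ} {x u : V} (h : Cov P ρ x u) (hr : ρ ≤ ρ') : Cov P ρ' x u := by
  obtain ⟨i, k, h, h'⟩ := h; exact ⟨i, k, h, by omega⟩

open Classical in
noncomputable def Tr (A : Finset V) (v : V) : Finset V := A.filter (fun u => Des P v u)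

lemma mem_Tr {A : Finset V} {v u : V} : u ∈ Tr P A v ↔ u ∈ A ∧ Des P v u := by
  classical
  simp [Tr]

def Closed (A : Finset V) : Prop := ∀ u ∈ A, P.par u ∈ A

lemma Closed.iter {A : Finset V} (h : Closed P A) (i : ℕ) {u : V} (hu : u ∈ A) :
    P.par^[i] u ∈ A := by
  induction i with
  | zero => simpa
  | succ i ih => rw [Function.iterate_succ_apply']; exact h _ ih

open Classical in
lemma Closed.sdiff {A : Finset V} (h : Closed P A) (w : V) : Closed P (A \ Tr P A w) := by
  intro u hu
  rw [Finset.mem_sdiff, mem_Tr] at *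
  exact ⟨h u hu.1, fun h2 => hu.2 ⟨hu.1, des_of_par P h2.2⟩⟩

open Classical in
noncomputable def Pa (z : V) (m : ℕ) : Finset V := (Finset.range m).image (fun i => P.par^[i] z)

lemma card_Pa (z : V) (m : ℕ) (h : m ≤ P.lev z + 1) : (Pa P z m).card = m := by
  classical
  rw [Pa, Finset.card_image_of_injOn, Finset.card_range]
  intro a ha b hb hab
  have := congrArg P.lev hab
  simp only [lev_iter] at this
  simp at ha hb
  omega

lemma Pa_sub {A : Finset V} (hA : Closed P A) {c z : V} (hz : z ∈ A) (hc : Des P c z) (m : ℕ)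
    (h : m + P.lev c ≤ P.lev z + 1) : Pa P z m ⊆ Tr P A c := by
  classical
  intro a ha
  simp only [Pa, Finset.mem_image, Finset.mem_range] at ha
  obtain ⟨i, hi, rfl⟩ := ha
  rw [mem_Tr]
  refine ⟨hA.iter P i hz, des_chain P hc (des_iter P i z) ?_⟩
  rw [lev_iter]; omega

lemma key [Fintype V] (A : Finset V) (hA : Closed P A) (R D : ℕ) (hD : D ≤ R + 1) :
    (∃ x, ∀ u ∈ A, Cov P R x u) ∨
    (∃ A' ⊆ A, Closed P A' ∧ A'.card + (R + D) ≤ A.card ∧ ∃ x, ∀ u ∈ A, u ∉ A' → Cov P R x u) ∨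
    (∃ q, q + 3 ≤ 2 * D ∧ ∃ A' ⊆ A, Closed P A' ∧ A'.card + (2 * R + 1 + q) ≤ A.card ∧
      ∃ x w, ∀ u ∈ A, u ∉ A' → Cov P R x u ∨ Cov P q w u) := by
  classical
  by_cases hcov : ∃ x, ∀ u ∈ A, Cov P R x u
  · exact Or.inl hcov
  right
  by_cases hsing : (∃ A' ⊆ A, Closed P A' ∧ A'.card + (R + D) ≤ A.card ∧
      ∃ x, ∀ u ∈ A, u ∉ A' → Cov P R x u)
  · exact Or.inl hsing
  right
  -- single inefficiency
  have small : ∀ w, (∃ x, ∀ u ∈ Tr P A w, Cov P R x u) → (Tr P A w).card < R + D := by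
    rintro w ⟨x, hx⟩
    by_contra hlt
    apply hsing
    have hsub : Tr P A w ⊆ A := fun u hu => ((mem_Tr P).1 hu).1
    refine ⟨A \ Tr P A w, Finset.sdiff_subset, hA.sdiff P w, ?_, x, ?_⟩
    · have := Finset.card_sdiff_add_card_eq_card hsub
      omega
    · intro u hu hn
      apply hx
      by_contra h
      exact hn (Finset.mem_sdiff.2 ⟨hu, h⟩)
  let good : V → Prop := fun v => ∀ x0 ∈ Tr P A v, (∀ u ∈ Tr P A v, P.lev u ≤ P.lev x0) →
    ∀ u ∈ Tr P A v, Cov P R (P.par^[R] x0) u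
  have good_small : ∀ w, good w → (Tr P A w).card < R + D := by
    intro w hw
    apply small
    rcases (Tr P A w).eq_empty_or_nonempty with he | hne
    · exact ⟨w, by simp [he]⟩
    · obtain ⟨x0, hx0, hm⟩ := Finset.exists_max_image _ P.lev hne
      exact ⟨_, hw x0 hx0 hm⟩
  have hroot : ¬ good P.root := by
    intro hg
    apply hcov
    rcases A.eq_empty_or_nonempty with he | hne
    · exact ⟨P.root, by simp [he]⟩
    · obtain ⟨x0, hx0, hm⟩ := Finset.exists_max_image _ P.lev hne
      refine ⟨_, fun u hu => hg x0 ((mem_Tr P).2 ⟨hx0, des_root P _⟩) ?_ u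
        ((mem_Tr P).2 ⟨hu, des_root P _⟩)⟩
      exact fun u hu => hm u ((mem_Tr P).1 hu).1
  obtain ⟨v, hv, hvmax⟩ := Finset.exists_max_image (Finset.univ.filter (fun v => ¬ good v)) P.lev
    ⟨P.root, by simpa using hroot⟩
  have hvng : ¬ good v := by simpa using hv
  have hvgood : ∀ w, P.lev v < P.lev w → good w := by
    intro w hw
    by_contra h
    have := hvmax w (by simpa using h)
    omega
  simp only [good] at hvng
  push Not at hvng
  obtain ⟨x0, hx0, hx0m, u0, hu0, hu0n⟩ := hvng
  obtain ⟨hx0A, hx0v⟩ := (mem_Tr P).1 hx0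
  obtain ⟨hu0A, hu0v⟩ := (mem_Tr P).1 hu0
  have hjR : R + P.lev v < P.lev x0 := by
    by_contra h
    apply hu0n
    have hxv : Des P (P.par^[R] x0) v := by
      apply des_chain P (des_iter P R x0) hx0v
      rw [lev_iter]; omega
    refine cov_of P (des_refl P _) (des_trans P hxv hu0v) ?_
    have := hx0m u0 hu0
    have := hx0v.1
    rw [lev_iter]
    have h9 := hxv.1
    rw [lev_iter] at h9
    by_cases hR : R ≤ P.lev x0
    · omega
    · omega
  have hvx : Des P v (P.par^[R] x0) := by
    apply des_chain P hx0v (des_iter P R x0)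
    rw [lev_iter]; omega
  -- uncovered vertices are deep
  have deep : ∀ u ∈ Tr P A v, ¬ Cov P R (P.par^[R] x0) u →
      2 * R + 2 * P.lev v < P.lev x0 + P.lev u := by
    intro u hu hn
    by_contra h
    apply hn
    refine cov_of P hvx ((mem_Tr P).1 hu).2 ?_
    rw [lev_iter]; omega
  -- common ancestors
  have common : ∀ a, P.lev v < P.lev a → Des P a x0 → ∀ u ∈ A, Des P a u →
      Cov P R (P.par^[R] x0) u := by
    intro a ha hax u hu hau
    refine hvgood a ha x0 ((mem_Tr P).2 ⟨hx0A, hax⟩) ?_ u ((mem_Tr P).2 ⟨hu, hau⟩)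
    intro u' hu'
    obtain ⟨h1, h2⟩ := (mem_Tr P).1 hu'
    exact hx0m u' ((mem_Tr P).2 ⟨h1, des_trans P (des_chain P hx0v hax ha.le) h2⟩)
  -- c1
  obtain ⟨c1, hc1, hc1l⟩ : ∃ c1, Des P c1 x0 ∧ P.lev c1 = P.lev v + 1 :=
    ⟨P.par^[P.lev x0 - (P.lev v + 1)] x0, des_iter P _ _, by rw [lev_iter]; omega⟩
  have hT1 := good_small c1 (hvgood c1 (by omega))
  have hT1' : P.lev x0 - P.lev v ≤ (Tr P A c1).card := by
    rw [← card_Pa P x0 (P.lev x0 - P.lev v) (by omega)]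
    exact Finset.card_le_card (Pa_sub P hA hx0A hc1 _ (by omega))
  have hu0d := deep u0 hu0 hu0n
  have hu0l : P.lev v < P.lev u0 := by omega
  obtain ⟨c2, hc2, hc2l⟩ : ∃ c2, Des P c2 u0 ∧ P.lev c2 = P.lev v + 1 :=
    ⟨P.par^[P.lev u0 - (P.lev v + 1)] u0, des_iter P _ _, by rw [lev_iter]; omega⟩
  have hvc2 : Des P v c2 := des_chain P hu0v hc2 (by omega)
  have hT2 := good_small c2 (hvgood c2 (by omega))
  have hne : c1 ≠ c2 := by
    rintro rfl
    exact hu0n (common c1 (by omega) hc1 u0 hu0A hc2)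
  obtain ⟨y0, hy0, hy0m⟩ := Finset.exists_max_image (Tr P A c2) P.lev
    ⟨u0, (mem_Tr P).2 ⟨hu0A, hc2⟩⟩
  obtain ⟨hy0A, hy0c⟩ := (mem_Tr P).1 hy0
  have hy0u := hy0m u0 ((mem_Tr P).2 ⟨hu0A, hc2⟩)
  have hex : ∃ q, q + P.lev v + 1 ≤ P.lev y0 ∧ ∀ u ∈ Tr P A c2,
      ¬ Cov P R (P.par^[R] x0) u → Des P (P.par^[q] y0) u := by
    refine ⟨P.lev y0 - P.lev c2, by omega, fun u hu _ => ?_⟩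
    rw [hy0c.2]; exact ((mem_Tr P).1 hu).2
  obtain ⟨q, ⟨hq1, hq2⟩, hqmin⟩ : ∃ q, (q + P.lev v + 1 ≤ P.lev y0 ∧ ∀ u ∈ Tr P A c2,
      ¬ Cov P R (P.par^[R] x0) u → Des P (P.par^[q] y0) u) ∧ ∀ q' < q,
      ¬ (q' + P.lev v + 1 ≤ P.lev y0 ∧ ∀ u ∈ Tr P A c2,
      ¬ Cov P R (P.par^[R] x0) u → Des P (P.par^[q'] y0) u) :=
    ⟨Nat.find hex, Nat.find_spec hex, fun q' h => Nat.find_min hex h⟩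
  have hwc : Des P c2 (P.par^[q] y0) := by
    apply des_chain P hy0c (des_iter P q y0)
    rw [lev_iter]; omega
  have hT2' : 2 * R + 1 + q + P.lev v ≤ P.lev x0 + (Tr P A c2).card := by
    have hpy : Pa P y0 (P.lev y0 - P.lev v) ⊆ Tr P A c2 := Pa_sub P hA hy0A hy0c _ (by omega)
    have hpyc := card_Pa P y0 (P.lev y0 - P.lev v) (by omega)
    rcases Nat.eq_zero_or_pos q with hq0 | hqpos
    · have := Finset.card_le_card hpy
      omega
    · have hm := hqmin (q - 1) (by omega)
      push Not at hm
      obtain ⟨z, hz, hzn, hzd⟩ := hm (by omega)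
      obtain ⟨hzA, hzc⟩ := (mem_Tr P).1 hz
      have hzw := hq2 z hz hzn
      have hzdeep := deep z ((mem_Tr P).2 ⟨hzA, des_trans P hvc2 hzc⟩) hzn
      have hwl := lev_iter P q y0
      have hzl := hzw.1
      have hpz : Pa P z (P.lev z - P.lev (P.par^[q] y0)) ⊆ Tr P A c2 :=
        Pa_sub P hA hzA hzc _ (by have := hwc.1; omega)
      have hpzc := card_Pa P z (P.lev z - P.lev (P.par^[q] y0)) (by omega)
      have hdis : Disjoint (Pa P y0 (P.lev y0 - P.lev v))
          (Pa P z (P.lev z - P.lev (P.par^[q] y0))) := by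
        rw [Finset.disjoint_left]
        intro a ha hb
        simp only [Pa, Finset.mem_image, Finset.mem_range] at ha hb
        obtain ⟨i, hi, rfl⟩ := ha
        obtain ⟨k, hk, hkk⟩ := hb
        apply hzd
        have e := congrArg P.lev hkk
        rw [lev_iter, lev_iter] at e
        have h1 : Des P (P.par^[q - 1] y0) (P.par^[i] y0) := by
          apply des_chain P (des_iter P _ _) (des_iter P _ _)
          rw [lev_iter, lev_iter]; omega
        exact des_trans P h1 (hkk ▸ des_iter P k z)
      have := Finset.card_le_card (Finset.union_subset hpy hpz)
      rw [Finset.card_union_of_disjoint hdis] at this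
      omega
  have hdisT : Disjoint (Tr P A c1) (Tr P A c2) := by
    rw [Finset.disjoint_left]
    intro a ha hb
    exact hne (des_eq P ((mem_Tr P).1 ha).2 ((mem_Tr P).1 hb).2 (by omega))
  refine ⟨q, by omega, A \ (Tr P A c1 ∪ Tr P A c2), Finset.sdiff_subset, ?_, ?_, P.par^[R] x0,
    P.par^[q] y0, ?_⟩
  · intro u hu
    have h1 := hA.sdiff P c1 u
    have h2 := hA.sdiff P c2 u
    simp only [Finset.mem_sdiff, Finset.mem_union] at *
    tauto
  · have hsub : Tr P A c1 ∪ Tr P A c2 ⊆ A :=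
      Finset.union_subset (fun u hu => ((mem_Tr P).1 hu).1) (fun u hu => ((mem_Tr P).1 hu).1)
    have := Finset.card_sdiff_add_card_eq_card hsub
    rw [Finset.card_union_of_disjoint hdisT] at this
    omega
  · intro u hu hn
    by_cases hc : Cov P R (P.par^[R] x0) u
    · exact Or.inl hc
    right
    have hu2 : u ∈ Tr P A c2 := by
      by_contra h2
      by_cases h1 : u ∈ Tr P A c1
      · exact hc (common c1 (by omega) hc1 u hu ((mem_Tr P).1 h1).2)
      · exact hn (by simp [hu, h1, h2])
    have hd := hq2 u hu2 hc
    refine cov_of P (des_refl P _) hd ?_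
    have := hy0m u hu2
    rw [lev_iter]; omega

lemma main [Fintype V] : ∀ (p : ℕ) (S : Finset ℕ), S.card = p → ∀ A : Finset V, Closed P A →
    A.card ≤ ∑ r ∈ S, r + p ^ 2 / 4 → ∃ x : ℕ → V, ∀ u ∈ A, ∃ r ∈ S, Cov P r (x r) u := by
  classical
  intro p
  induction p using Nat.strong_induction_on with
  | _ p ih =>
  intro S hS A hA hcard
  rcases S.eq_empty_or_nonempty with he | hne
  · subst he
    simp at hS
    subst hS
    simp at hcard
    exact ⟨fun _ => P.root, by simp [hcard]⟩
  obtain ⟨R, hR, hRmax⟩ := Finset.exists_max_image S id hne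
  simp only [id] at hRmax
  have hpR : p ≤ R + 1 := by
    have : S ⊆ Finset.range (R + 1) := fun s hs => by
      have := hRmax s hs
      simp; omega
    have := Finset.card_le_card this
    simp at this; omega
  have hp1 : 1 ≤ p := by rw [← hS]; exact hne.card_pos
  have hsum := Finset.add_sum_erase S (fun r => r) hR
  have hce := Finset.card_erase_of_mem hR
  rcases key P A hA R (p / 2) (by omega) with ⟨x, hx⟩ | ⟨A', hsub, hA', hc, x, hx⟩ |
    ⟨q, hq, A', hsub, hA', hc, x, w, hx⟩
  · exact ⟨fun _ => x, fun u hu => ⟨R, hR, hx u hu⟩⟩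
  · obtain ⟨f, hf⟩ := ih (p - 1) (by omega) (S.erase R) (by omega) A' hA' (by
      obtain ⟨m, rfl⟩ : ∃ m, p = m + 1 := ⟨p - 1, by omega⟩
      simp only [Nat.add_sub_cancel] at *
      have : (m + 1) ^ 2 / 4 ≤ m ^ 2 / 4 + (m + 1) / 2 := by
        rcases Nat.even_or_odd' m with ⟨t, rfl | rfl⟩ <;> ring_nf <;> omega
      omega)
    refine ⟨Function.update f R x, fun u hu => ?_⟩
    by_cases h : u ∈ A'
    · obtain ⟨r, hr, hcv⟩ := hf u h
      refine ⟨r, Finset.mem_of_mem_erase hr, ?_⟩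
      rwa [Function.update_of_ne (Finset.ne_of_mem_erase hr)]
    · exact ⟨R, hR, by simpa using hx u hu h⟩
  · obtain ⟨s, hs, hsq, hsD⟩ : ∃ s ∈ S.erase R, q ≤ s ∧ s + (p - 1) ≤ R + q + 1 := by
      by_contra hcon
      push Not at hcon
      have : S.erase R ⊆ Finset.range q ∪ Finset.Ico (R + q + 3 - p) R := by
        intro s hs
        have h1 := hcon s hs
        have h2 := hRmax s (Finset.mem_of_mem_erase hs)
        have h3 := Finset.ne_of_mem_erase hs
        simp only [Finset.mem_union, Finset.mem_range, Finset.mem_Ico]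
        by_cases h : s < q
        · exact Or.inl h
        · right
          have := h1 (by omega)
          omega
      have h4 := (Finset.card_le_card this).trans (Finset.card_union_le _ _)
      simp at h4
      omega
    have hsum2 := Finset.add_sum_erase (S.erase R) (fun r => r) hs
    have hce2 := Finset.card_erase_of_mem hs
    obtain ⟨f, hf⟩ := ih (p - 2) (by omega) ((S.erase R).erase s) (by omega) A' hA' (by
      obtain ⟨m, rfl⟩ : ∃ m, p = m + 2 := ⟨p - 2, by omega⟩
      simp only [Nat.add_sub_cancel] at *
      have : (m + 2) ^ 2 / 4 = m ^ 2 / 4 + (m + 1) := by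
        rw [show (m + 2) ^ 2 = m ^ 2 + (m + 1) * 4 by ring]
        omega
      omega)
    have hsR := Finset.ne_of_mem_erase hs
    refine ⟨Function.update (Function.update f R x) s w, fun u hu => ?_⟩
    by_cases h : u ∈ A'
    · obtain ⟨r, hr, hcv⟩ := hf u h
      have hr2 := Finset.mem_of_mem_erase hr
      refine ⟨r, Finset.mem_of_mem_erase hr2, ?_⟩
      rwa [Function.update_of_ne (Finset.ne_of_mem_erase hr),
        Function.update_of_ne (Finset.ne_of_mem_erase hr2)]
    · rcases hx u hu h with h1 | h1
      · refine ⟨R, hR, ?_⟩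
        rw [Function.update_of_ne hsR.symm]
        simpa using h1
      · refine ⟨s, Finset.mem_of_mem_erase hs, ?_⟩
        simpa using h1.mono P hsq

lemma exists_ptree (G : SimpleGraph V) (hG : G.Connected) :
    ∃ P : PTree V, ∀ v, G.dist v (P.par v) ≤ 1 := by
  obtain ⟨r⟩ := hG.nonempty
  have hstep : ∀ v, ∃ w, G.dist r w = G.dist r v - 1 ∧ G.dist v w ≤ 1 := by
    intro v
    by_cases hv : v = r
    · exact ⟨v, by simp [hv], by simp⟩
    · obtain ⟨p, hp⟩ := hG.exists_walk_length_eq_dist v r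
      cases p with
      | nil => exact absurd rfl hv
      | @cons _ w _ h p =>
        refine ⟨w, ?_, (SimpleGraph.dist_eq_one_iff_adj.2 h).le⟩
        have h1 := SimpleGraph.dist_le p
        have h2 : G.dist v r ≤ G.dist v w + G.dist w r := hG.dist_triangle
        have h3 := SimpleGraph.dist_eq_one_iff_adj.2 h
        rw [SimpleGraph.Walk.length_cons] at hp
        rw [SimpleGraph.dist_comm (u := r), SimpleGraph.dist_comm (u := r)]
        omega
  choose f hf1 hf2 using hstep
  refine ⟨⟨f, G.dist r, r, hf1, fun v hv => ((hG.dist_eq_zero_iff).1 hv).symm, ?_⟩, hf2⟩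
  have := hf1 r
  rw [SimpleGraph.dist_self] at this
  exact ((hG.dist_eq_zero_iff).1 this).symm

lemma dist_iter (G : SimpleGraph V) (hG : G.Connected) (hP : ∀ v, G.dist v (P.par v) ≤ 1)
    (i : ℕ) (u : V) : G.dist u (P.par^[i] u) ≤ i := by
  induction i with
  | zero => simp
  | succ i ih =>
    rw [Function.iterate_succ_apply']
    have h1 : G.dist u (P.par (P.par^[i] u)) ≤ _ + _ := hG.dist_triangle (v := P.par^[i] u)
    have := hP (P.par^[i] u)
    omega

lemma cov_dist (G : SimpleGraph V) (hG : G.Connected) (hP : ∀ v, G.dist v (P.par v) ≤ 1)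
    {ρ : ℕ} {x u : V} (h : Cov P ρ x u) : G.dist x u ≤ ρ := by
  obtain ⟨i, k, h, hik⟩ := h
  have h1 := dist_iter P G hG hP i x
  have h2 := dist_iter P G hG hP k u
  have h3 : G.dist x u ≤ _ + _ := hG.dist_triangle (v := P.par^[i] x)
  rw [h] at h3 h1
  rw [SimpleGraph.dist_comm (u := P.par^[k] u)] at h3
  omega

end Burn

/-- **Theorem (Bonato–Kamali).** If `G` is a connected graph of order `n ≥ 1`, then
`b(G) ≤ ⌈(√(12n + 64) + 8)/3⌉`. -/
theorem burningNumber_connected_le {V : Type*} [Fintype V] (T : SimpleGraph V)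
    (hT : T.Connected) (n : ℕ) (hn : n = Fintype.card V) (hn1 : 1 ≤ n) :
    burningNumber T ≤ ⌈(Real.sqrt (12 * (n : ℝ) + 64) + 8) / 3⌉₊ := by
  set k := ⌈(Real.sqrt (12 * (n : ℝ) + 64) + 8) / 3⌉₊ with hk
  have h1 : (Real.sqrt (12 * (n : ℝ) + 64) + 8) / 3 ≤ k := Nat.le_ceil _
  have h0 := Real.sqrt_nonneg (12 * (n : ℝ) + 64)
  have h2 : Real.sqrt (12 * (n : ℝ) + 64) ≤ 3 * k - 8 := by linarith
  have h3 : (12 * (n : ℝ) + 64) ≤ (3 * k - 8) ^ 2 := by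
    rw [← Real.sqrt_le_left (by linarith)]; exact h2
  have h4 : 4 * n + 16 * k ≤ 3 * k ^ 2 := by
    have : (4 * n + 16 * k : ℝ) ≤ 3 * k ^ 2 := by nlinarith
    exact_mod_cast this
  have hkpos : 0 < k := by
    rcases Nat.eq_zero_or_pos k with h | h
    · rw [h] at h4; omega
    · exact h
  obtain ⟨P, hP⟩ := Burn.exists_ptree T hT
  have hsum : (∑ r ∈ Finset.range k, r) * 2 = k * (k - 1) := Finset.sum_range_id_mul_two k
  obtain ⟨x, hx⟩ := Burn.main P k (Finset.range k) (by simp) Finset.univ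
    (fun _ _ => Finset.mem_univ _) (by
      rw [Finset.card_univ, ← hn]
      obtain ⟨m, hm⟩ : ∃ m, k = m + 1 := ⟨k - 1, by omega⟩
      rw [hm] at hsum h4 ⊢
      simp only [Nat.add_sub_cancel] at hsum
      have e1 : (m + 1) * m = m ^ 2 + m := by ring
      have e2 : (m + 1) ^ 2 = m ^ 2 + 2 * m + 1 := by ring
      rw [e1] at hsum
      rw [e2] at h4 ⊢
      omega)
  apply Nat.sInf_le
  refine ⟨hkpos, fun i => x (k - 1 - i), fun v => ?_⟩
  obtain ⟨r, hr, hc⟩ := hx v (Finset.mem_univ v)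
  rw [Finset.mem_range] at hr
  refine ⟨⟨k - 1 - r, by omega⟩, ?_⟩
  have : k - 1 - (k - 1 - r) = r := by omega
  simp only [this]
  exact Burn.cov_dist P T hT hP hc
end

section
/- Let T be a finite tree rooted at an arbitrary vertex, let j be a positive integer, and let R = {r_1 < r_2 < … < r_j} be a set of j distinct non-negative integers. Suppose some vertex of T has depth at least r_j (depth measured as distance to the root). Then there exist r* ∈ R and a vertex p of T such that the subtree T_p consisting of p and all its descendants has radius at most r* (radius taken in the subgraph induced on T_p) and has order at least r* + ⌊j/2⌋ − 3. -/
/-- In a tree `T` rooted at `w`, the set consisting of `p` together with all of its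
descendants: the vertices `q` such that `p` lies on the unique path from `q` to the
root `w`, equivalently `dist w q = dist w p + dist p q`. -/
def descSet {V : Type*} (T : SimpleGraph V) (w p : V) : Set V :=
  {q | T.dist w q = T.dist w p + T.dist p q}

theorem arith_aux (j : ℕ) (hj : 0 < j) (r : Fin j → ℕ) (hr : StrictMono r) (n : ℕ → ℕ) (D : ℕ)
    (hD : r ⟨j - 1, Nat.sub_lt hj Nat.one_pos⟩ ≤ D)
    (hn : ∀ a b, a ≤ b → b ≤ D → n a + (b - a) ≤ n b) (h0 : ∀ a, a ≤ D → a + 1 ≤ n a) :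
    ∃ (i : Fin j) (h : ℕ), h ≤ D ∧ (h ≤ r i ∨ n h ≤ 2 * r i) ∧ r i + (j / 2 - 3) ≤ n h := by
  by_contra hc
  push Not at hc
  set m : Fin j := ⟨j - 1, Nat.sub_lt hj Nat.one_pos⟩ with hm
  have step : ∀ d a (h : a + d < j), r ⟨a, by omega⟩ + d ≤ r ⟨a + d, h⟩ := by
    intro d
    induction d with
    | zero => intro a h; simp
    | succ d ih =>
      intro a h
      have h1 := ih a (by omega)
      have h2 : r ⟨a + d, by omega⟩ < r ⟨a + (d + 1), h⟩ := hr (by simp [Fin.lt_def])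
      omega
  have lem : ∀ a b (hab : a ≤ b) (hb : b < j), r ⟨a, by omega⟩ + (b - a) ≤ r ⟨b, hb⟩ := by
    intro a b hab hb
    obtain ⟨d, rfl⟩ := Nat.exists_eq_add_of_le hab
    simpa using step d a hb
  have key : ∀ d (h : (j / 2 - 3) + d < j), r ⟨(j / 2 - 3) + d, h⟩ + (j / 2 - 3) ≤ n (r m) := by
    intro d
    induction d with
    | zero =>
      intro h
      have h1 := lem (j / 2 - 3 + 0) (j - 1) (by omega) (by omega)
      have h2 := h0 _ hD
      rw [← hm] at h1
      omega
    | succ d ih =>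
      intro h
      have h1 := ih (by omega)
      have hex : ∃ x, r ⟨(j / 2 - 3) + d, by omega⟩ + (j / 2 - 3) ≤ n x := ⟨_, h1⟩
      classical
      obtain ⟨x, hx, hmin⟩ : ∃ x, r ⟨(j / 2 - 3) + d, by omega⟩ + (j / 2 - 3) ≤ n x ∧
          ∀ y, y < x → ¬ r ⟨(j / 2 - 3) + d, by omega⟩ + (j / 2 - 3) ≤ n y :=
        ⟨Nat.find hex, Nat.find_spec hex, fun y hy => Nat.find_min hex hy⟩
      have hxm : x ≤ r m := by
        by_contra hlt
        exact hmin _ (by omega) h1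
      have a1 := hc ⟨(j / 2 - 3) + d, by omega⟩ x (by omega)
      have a2 : 2 * r ⟨(j / 2 - 3) + d, by omega⟩ < n x := by
        by_contra hle
        exact absurd (a1 (Or.inr (by omega))) (by omega)
      have a3 := hn x (r m) hxm hD
      have b1 := lem (j / 2 - 3 + (d + 1)) (j - 1) (by omega) (by omega)
      have b2 := lem 0 (j / 2 - 3 + d) (by omega) (by omega)
      rw [← hm] at b1
      rcases Nat.eq_zero_or_pos x with rfl | hx0
      · omega
      · have c1 := hmin (x - 1) (by omega)
        have c2 := h0 (x - 1) (by omega)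
        omega
  have e1 := key (j - 1 - (j / 2 - 3)) (by omega)
  have e2 : (⟨j / 2 - 3 + (j - 1 - (j / 2 - 3)), by omega⟩ : Fin j) = m := by
    rw [hm]; ext; simp; omega
  rw [e2] at e1
  exact absurd (hc m (r m) hD (Or.inl le_rfl)) (by omega)
theorem dist_split {V : Type*} (T : SimpleGraph V) {a b x : V}
    (q : T.Walk a b) (hq : q.length = T.dist a b) (hx : x ∈ q.support)
    (hT : T.Connected) : T.dist a b = T.dist a x + T.dist x b := by
  classical
  have h1 := T.dist_le (q.takeUntil x hx)
  have h2 := T.dist_le (q.dropUntil x hx)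
  have h3 := congrArg SimpleGraph.Walk.length (q.take_spec hx)
  rw [SimpleGraph.Walk.length_append] at h3
  have h4 := hT.dist_triangle (u := a) (v := x) (w := b)
  omega

theorem mem_of_between {V : Type*} (T : SimpleGraph V) (hT : T.IsTree) {a b p : V}
    (h : T.dist a b = T.dist a p + T.dist p b) (q : T.Walk a b) : p ∈ q.support := by
  classical
  obtain ⟨s1, h1⟩ := hT.1.exists_walk_length_eq_dist a p
  obtain ⟨s2, h2⟩ := hT.1.exists_walk_length_eq_dist p b
  have hp : (s1.append s2).IsPath := by
    apply SimpleGraph.Walk.isPath_of_length_eq_dist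
    rw [SimpleGraph.Walk.length_append]; omega
  have he := (hT.2.subsingleton_path a b).elim ⟨_, hp⟩ ⟨_, q.bypass_isPath⟩
  have he' : s1.append s2 = q.bypass := congrArg Subtype.val he
  apply q.support_bypass_subset_support
  rw [← he']
  simp

theorem dist_through {V : Type*} (T : SimpleGraph V) (hT : T.IsTree) (w : V) {p x v : V}
    (hx : x ∈ descSet T w p) (hv : v ∉ descSet T w p) :
    T.dist v x = T.dist v p + T.dist p x := by
  obtain ⟨s, hs⟩ := hT.1.exists_walk_length_eq_dist w v
  obtain ⟨q, hq⟩ := hT.1.exists_walk_length_eq_dist v x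
  have hm := mem_of_between T hT hx (s.append q)
  rw [SimpleGraph.Walk.mem_support_append_iff] at hm
  rcases hm with hm | hm
  · exact absurd (dist_split T s hs hm hT.1) hv
  · exact dist_split T q hq hm hT.1

theorem self_mem_desc {V : Type*} (T : SimpleGraph V) (w p : V) : p ∈ descSet T w p := by
  simp [descSet]

theorem desc_convex {V : Type*} (T : SimpleGraph V) (hT : T.IsTree) (w : V) {p a b x : V}
    (ha : a ∈ descSet T w p) (hb : b ∈ descSet T w p)
    (h : T.dist a b = T.dist a x + T.dist x b) : x ∈ descSet T w p := by
  by_contra hx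
  have h1 := dist_through T hT w ha hx
  have h2 := dist_through T hT w hb hx
  have h3 := hT.1.dist_triangle (u := a) (v := p) (w := b)
  rw [T.dist_comm (u := x) (v := a), T.dist_comm (u := p) (v := a)] at h1
  have h4 : T.dist x p = 0 := by omega
  rw [hT.1.dist_eq_zero_iff] at h4
  exact hx (h4 ▸ self_mem_desc T w p)

theorem induce_length {V : Type*} (T : SimpleGraph V) (s : Set V) {a b : V} (q : T.Walk a b)
    (hq : ∀ x ∈ q.support, x ∈ s) : (q.induce s hq).length = q.length := by
  have h := congrArg SimpleGraph.Walk.length (q.map_induce hq)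
  rwa [SimpleGraph.Walk.length_map] at h

theorem induce_dist {V : Type*} (T : SimpleGraph V) (hT : T.IsTree) (w p : V)
    (a b : descSet T w p) : (T.induce (descSet T w p)).dist a b ≤ T.dist a b := by
  obtain ⟨q, hq⟩ := hT.1.exists_walk_length_eq_dist (a : V) b
  have hs : ∀ x ∈ q.support, x ∈ descSet T w p := fun x hx =>
    desc_convex T hT w a.2 b.2 (dist_split T q hq hx hT.1)
  have := (T.induce (descSet T w p)).dist_le (q.induce _ hs)
  rw [induce_length, hq] at this
  exact this

theorem desc_sub {V : Type*} (T : SimpleGraph V) (hT : T.IsTree) (w : V) {p q : V}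
    (hq : q ∈ descSet T w p) : descSet T w q ⊆ descSet T w p := by
  intro x hx
  have h1 := hT.1.dist_triangle (u := w) (v := p) (w := x)
  have h2 := hT.1.dist_triangle (u := p) (v := q) (w := x)
  simp only [descSet, Set.mem_ofPred_eq] at *
  omega

theorem card_bound {V : Type*} [Fintype V] (T : SimpleGraph V) (hT : T.IsTree) (w : V) {p c v : V}
    (hc : c ∈ descSet T w p) (hv : v ∈ descSet T w p) (hvc : v ∉ descSet T w c) :
    Nat.card (descSet T w c) + T.dist c v ≤ Nat.card (descSet T w p) := by
  classical
  obtain ⟨q, hqp, hq⟩ := hT.1.exists_path_of_dist c v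
  have hs : ∀ x ∈ q.support, x ∈ descSet T w p := fun x hx =>
    desc_convex T hT w hc hv (dist_split T q hq hx hT.1)
  have hd : ∀ x ∈ q.support, x ∈ descSet T w c → x = c := by
    intro x hx hxc
    have h1 := dist_through T hT w hxc hvc
    have h2 := dist_split T q hq hx hT.1
    rw [T.dist_comm (u := v) (v := x), T.dist_comm (u := v) (v := c)] at h1
    have h3 : T.dist c x = 0 := by omega
    exact (hT.1.dist_eq_zero_iff.1 h3).symm
  let F : Finset V := q.support.toFinset.erase c
  have hF : F.card = T.dist c v := by
    rw [Finset.card_erase_of_mem (by simp), List.toFinset_card_of_nodup hqp.support_nodup,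
      SimpleGraph.Walk.length_support, hq]; simp
  rw [← hF, Nat.card_coe_set_eq, Nat.card_coe_set_eq, ← Set.ncard_coe_finset, ← Set.ncard_union_eq]
  · apply Set.ncard_le_ncard _ (Set.toFinite _)
    apply Set.union_subset (desc_sub T hT w hc)
    intro x hx
    simp [F] at hx
    exact hs x hx.1
  · rw [Set.disjoint_left]
    intro x hx hxF
    simp [F] at hxF
    exact hxF.2 (hd x hxF.1 hx)

/-- **Key step (Bonato–Kamali).** Let `T` be a finite tree rooted at a vertex `w`, and
let `R = {r_1 < r_2 < … < r_j}` be a set of `j` distinct non-negative integers,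
represented by a strictly monotone enumeration `r : Fin j → ℕ`. Suppose some vertex of
`T` has depth at least `r_j`. Then there exist `r* ∈ R` and a vertex `p` such that the
subtree `T_p` (consisting of `p` and all its descendants, with the induced graph
structure) has radius at most `r*` (witnessed by a center `u` of `T_p` within distance
`r*` of every vertex of `T_p`) and has order at least `r* + ⌊j/2⌋ - 3`. -/
theorem exists_subtree_of_radius_and_order {V : Type*} [Fintype V]
    (T : SimpleGraph V) (hT : T.IsTree) (w : V)
    (j : ℕ) (hj : 0 < j) (r : Fin j → ℕ) (hr : StrictMono r)
    (hdeep : ∃ u : V, r ⟨j - 1, Nat.sub_lt hj Nat.one_pos⟩ ≤ T.dist w u) :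
    ∃ (i : Fin j) (p : V),
      (∃ u : ↥(descSet T w p), ∀ v : ↥(descSet T w p),
        (T.induce (descSet T w p)).dist u v ≤ r i) ∧
      (r i : ℤ) + (j : ℤ) / 2 - 3 ≤ (Nat.card ↥(descSet T w p) : ℤ) := by
  obtain ⟨u0, hu0⟩ := hdeep
  have : Nonempty V := ⟨w⟩
  obtain ⟨u, hu⟩ := Finite.exists_max (fun x => T.dist w x)
  obtain ⟨q, hq⟩ := hT.1.exists_walk_length_eq_dist w u
  set D := T.dist w u with hD
  have hdist : ∀ h, h ≤ D → T.dist w (q.getVert (D - h)) = D - h ∧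
      T.dist (q.getVert (D - h)) u = h := by
    intro h hh
    have h1 := dist_split T q hq (q.getVert_mem_support (D - h)) hT.1
    have h2 := T.dist_le (q.take (D - h))
    have h3 := T.dist_le (q.drop (D - h))
    rw [SimpleGraph.Walk.take_length] at h2
    rw [SimpleGraph.Walk.drop_length] at h3
    omega
  have hmem : ∀ a b, a ≤ b → b ≤ D →
      q.getVert (D - a) ∈ descSet T w (q.getVert (D - b)) := by
    intro a b hab hb
    have h1 := hdist a (by omega)
    have h2 := hdist b hb
    have h3 := T.dist_le ((q.drop (D - b)).take (b - a))
    rw [SimpleGraph.Walk.take_length, SimpleGraph.Walk.drop_getVert,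
      show D - b + (b - a) = D - a by omega] at h3
    have h4 := hT.1.dist_triangle (u := w) (v := q.getVert (D - b)) (w := q.getVert (D - a))
    simp only [descSet, Set.mem_ofPred_eq]
    omega
  have hheight : ∀ h, h ≤ D → ∀ x ∈ descSet T w (q.getVert (D - h)),
      T.dist (q.getVert (D - h)) x ≤ h := by
    intro h hh x hx
    have h1 := hdist h hh
    have h2 := hu x
    simp only [descSet, Set.mem_ofPred_eq] at hx h2
    omega
  set n : ℕ → ℕ := fun h => Nat.card (descSet T w (q.getVert (D - h))) with hn
  have hstep : ∀ h, h + 1 ≤ D → n h + 1 ≤ n (h + 1) := by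
    intro h hh
    have hsub := desc_sub T hT w (hmem h (h + 1) (by omega) hh)
    have hlt : n h < n (h + 1) := by
      simp only [hn, Nat.card_coe_set_eq]
      apply Set.ncard_lt_ncard _ (Set.toFinite _)
      refine ⟨hsub, fun hsup => ?_⟩
      have h1 := hsup (self_mem_desc T w _)
      have h2 := hdist h (by omega)
      have h3 := hdist (h + 1) hh
      simp only [descSet, Set.mem_ofPred_eq] at h1
      omega
    omega
  have hmono : ∀ a b, a ≤ b → b ≤ D → n a + (b - a) ≤ n b := by
    intro a b hab
    induction b, hab using Nat.le_induction with
    | base => intro _; simp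
    | succ b hab ih =>
      intro hb
      have h1 := ih (by omega)
      have h2 := hstep b hb
      omega
  have hpos : 1 ≤ n 0 := by
    have : Nonempty (descSet T w (q.getVert (D - 0))) := ⟨⟨_, self_mem_desc T w _⟩⟩
    exact Nat.card_pos
  have hlow : ∀ a, a ≤ D → a + 1 ≤ n a := by
    intro a ha
    have := hmono 0 a (by omega) ha
    omega
  obtain ⟨i, h, hh, hcase, hbig⟩ := arith_aux j hj r hr n D (hu0.trans (hu u0)) hmono hlow
  refine ⟨i, q.getVert (D - h), ?_, ?_⟩
  · by_cases hle : h ≤ r i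
    · refine ⟨⟨_, self_mem_desc T w _⟩, fun v => ?_⟩
      exact (induce_dist T hT w _ _ v).trans ((hheight h hh v v.2).trans hle)
    · have hnle : n h ≤ 2 * r i := hcase.resolve_left hle
      have hc := hmem (r i) h (by omega) hh
      refine ⟨⟨_, hc⟩, fun v => (induce_dist T hT w _ _ v).trans ?_⟩
      by_cases hv : (v : V) ∈ descSet T w (q.getVert (D - r i))
      · exact hheight (r i) (by omega) v hv
      · have h1 := card_bound T hT w hc v.2 hv
        have h2 := hlow (r i) (by omega)
        simp only [hn] at h2 hnle
        simp only
        omega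
  · simp only [hn] at hbig
    omega
end

section
/- Let T be a finite tree of order n and let k be a positive integer with n ≤ (3k² − 16k)/4. Then the vertex set of T can be partitioned into k (possibly empty) sets S_0, S_1, …, S_{k−1} such that for each r, the set S_r induces a subtree of T (a connected subgraph, if nonempty) whose radius is at most r. -/
namespace TP
section tree
open SimpleGraph Classical

variable {V : Type*} {T : SimpleGraph V}

theorem mem_geo {u v x : V} (p : T.Walk u v) (hp : p.length = T.dist u v) (hx : x ∈ p.support) :
    T.dist u x + T.dist x v ≤ T.dist u v := by
  have h1 := dist_le (p.takeUntil x hx)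
  have h2 := dist_le (p.dropUntil x hx)
  have h3 := congrArg Walk.length (p.take_spec hx)
  rw [Walk.length_append] at h3
  omega

theorem key (hT : T.IsTree) {a b w z : V} (hab : T.Adj a b)
    (h1 : T.dist w a < T.dist w b) (h2 : T.dist z b < T.dist z a) :
    T.dist w z = T.dist w a + 1 + T.dist b z := by
  have hc := hT.connected
  obtain ⟨p, hp⟩ := hc.exists_walk_length_eq_dist w a
  obtain ⟨q, hq⟩ := hc.exists_walk_length_eq_dist b z
  have pp := p.isPath_of_length_eq_dist hp
  have qp := q.isPath_of_length_eq_dist hq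
  have hpath : (p.append (Walk.cons hab q)).IsPath := by
    rw [Walk.isPath_def, Walk.support_append, Walk.support_cons, List.tail_cons,
      List.nodup_append]
    refine ⟨pp.support_nodup, qp.support_nodup, ?_⟩
    intro x hx y hy hxy
    subst hxy
    have e1 := mem_geo p hp hx
    have e2 := mem_geo q hq hy
    have t1 := hc.dist_triangle (u := w) (v := x) (w := b)
    have t2 := hc.dist_triangle (u := z) (v := x) (w := a)
    have c1 := T.dist_comm (u := z) (v := b)
    have c2 := T.dist_comm (u := z) (v := x)
    have c3 := T.dist_comm (u := b) (v := x)
    omega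
  obtain ⟨r, hr, hrl⟩ := hc.exists_path_of_dist w z
  have := (hT.isAcyclic.subsingleton_path w z).elim ⟨r, hr⟩ ⟨_, hpath⟩
  have h4 := congrArg (fun x : T.Path w z => x.1.length) this
  simp only [Walk.length_append, Walk.length_cons] at h4
  omega

def Conv (T : SimpleGraph V) (S : Finset V) : Prop :=
  ∀ u ∈ S, ∀ v ∈ S, ∀ z, T.dist u z + T.dist z v = T.dist u v → z ∈ S

def Rad (T : SimpleGraph V) (S : Finset V) (i : ℕ) : Prop :=
  Conv T S ∧ ∃ c ∈ S, ∀ v ∈ S, T.dist c v ≤ i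

theorem Rad.mono {S : Finset V} {i j : ℕ} (h : Rad T S i) (hij : i ≤ j) : Rad T S j := by
  obtain ⟨h1, c, hc, h2⟩ := h
  exact ⟨h1, c, hc, fun v hv => (h2 v hv).trans hij⟩

theorem conv_half (hT : T.IsTree) {S : Finset V} (hS : Conv T S) {a b : V} (hab : T.Adj a b) :
    Conv T (S.filter fun w => T.dist w a < T.dist w b) := by
  intro u hu v hv z hz
  rw [Finset.mem_filter] at hu hv ⊢
  refine ⟨hS u hu.1 v hv.1 z hz, ?_⟩
  by_contra hcon
  have hne := hT.dist_ne_of_adj z hab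
  have h2 : T.dist z b < T.dist z a := by omega
  have k1 := key hT hab hu.2 h2
  have k2 := key hT hab hv.2 h2
  have t := hT.connected.dist_triangle (u := u) (v := a) (w := v)
  have c1 := T.dist_comm (u := v) (v := z)
  have c2 := T.dist_comm (u := a) (v := v)
  omega

theorem geo (hT : T.IsTree) (s t : V) : ∃ p : ℕ → V, p 0 = s ∧ p (T.dist s t) = t ∧
    ∀ i j, i ≤ j → j ≤ T.dist s t → T.dist (p i) (p j) = j - i := by
  obtain ⟨w, hw⟩ := hT.connected.exists_walk_length_eq_dist s t
  have step : ∀ j i, i ≤ j → j ≤ T.dist s t → T.dist (w.getVert i) (w.getVert j) ≤ j - i := by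
    intro j
    induction j with
    | zero => intro i hi _; obtain rfl : i = 0 := by omega
              simp
    | succ j ih =>
      intro i hi hj
      rcases Nat.eq_or_lt_of_le hi with rfl | hlt
      · simp
      have h1 := ih i (by omega) (by omega)
      have h2 := w.adj_getVert_succ (i := j) (by omega)
      have h3 := dist_eq_one_iff_adj.mpr h2
      have h4 := hT.connected.dist_triangle (u := w.getVert i) (v := w.getVert j)
        (w := w.getVert (j+1))
      omega
  refine ⟨w.getVert, w.getVert_zero, by rw [← hw]; exact w.getVert_length, ?_⟩
  intro i j hij hj
  have h1 := step j i hij hj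
  have h2 := step i 0 (by omega) (by omega)
  have h3 := step _ j hj le_rfl
  rw [w.getVert_zero] at h2
  rw [← hw, w.getVert_length, hw] at h3
  have h4 := hT.connected.dist_triangle (u := s) (v := w.getVert i) (w := t)
  have h5 := hT.connected.dist_triangle (u := w.getVert i) (v := w.getVert j) (w := t)
  omega

structure IsCoord (T : SimpleGraph V) (S : Finset V) (D : ℕ) (p : ℕ → V) (q e : V → ℕ) :
    Prop where
  pS : ∀ i ≤ D, p i ∈ S
  qD : ∀ v, q v ≤ D
  eq : ∀ v ∈ S, e v ≤ q v
  eqD : ∀ v ∈ S, e v + q v ≤ D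
  dist : ∀ v ∈ S, ∀ i ≤ D, T.dist (p i) v = e v + (q v - i) + (i - q v)
  fib : ∀ v ∈ S, e v + 1 ≤ (S.filter fun z => q z = q v).card
  convL : ∀ i, Conv T (S.filter fun v => q v ≤ i)
  convR : ∀ i, Conv T (S.filter fun v => i ≤ q v)
  diam : ∀ u ∈ S, ∀ v ∈ S, T.dist u v ≤ D
  qp : ∀ i ≤ D, q (p i) = i
  ep : ∀ i ≤ D, e (p i) = 0

theorem exists_coord (hT : T.IsTree) {S : Finset V} (hS : Conv T S) (hne : S.Nonempty) :
    ∃ D p q e, IsCoord T S D p q e := by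
  obtain ⟨⟨s, t⟩, hst, hmax⟩ := (S ×ˢ S).exists_max_image (fun x => T.dist x.1 x.2)
    (hne.product hne)
  rw [Finset.mem_product] at hst
  obtain ⟨hs, ht⟩ := hst
  simp only at hs ht
  obtain ⟨p, p0, pD, hp⟩ := geo hT s t
  set D := T.dist s t with hD
  have hdiam : ∀ u ∈ S, ∀ v ∈ S, T.dist u v ≤ D := fun u hu v hv =>
    hmax (u, v) (Finset.mem_product.mpr ⟨hu, hv⟩)
  have hmin : ∀ v, ∃ i, i ≤ D ∧ ∀ j ≤ D, T.dist v (p i) ≤ T.dist v (p j) := by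
    intro v
    obtain ⟨i, hi, h⟩ := (Finset.range (D+1)).exists_min_image (fun i => T.dist v (p i)) (by simp)
    refine ⟨i, by simpa [Nat.lt_succ_iff] using hi, fun j hj => h j (by simp; omega)⟩
  choose q hq hqm using hmin
  have hadj : ∀ i, i + 1 ≤ D → T.Adj (p i) (p (i+1)) := by
    intro i hi
    rw [← dist_eq_one_iff_adj, hp i (i+1) (by omega) hi]; omega
  have hd : ∀ v, ∀ i ≤ D, T.dist (p i) v = T.dist v (p (q v)) + (q v - i) + (i - q v) := by
    intro v i hi
    rcases lt_trichotomy i (q v) with h | h | h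
    · obtain ⟨m, hm⟩ : ∃ m, q v = m + 1 := ⟨q v - 1, by omega⟩
      have hqv := hq v
      have a := hadj m (by omega)
      have l := hqm v m (by omega)
      have n := hT.dist_ne_of_adj v a
      have e1 := hp i m (by omega) (by omega)
      have e2 := hp i (m+1) (by omega) (by omega)
      rw [hm] at l ⊢
      have k := key hT a (w := p i) (z := v) (by omega) (by omega)
      rw [T.dist_comm (u := v)]
      omega
    · subst h; rw [T.dist_comm]; omega
    · have a := hadj (q v) (by omega)
      have l := hqm v (q v + 1) (by omega)
      have n := hT.dist_ne_of_adj v a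
      have e1 := hp (q v) i (by omega) (by omega)
      have e2 := hp (q v + 1) i (by omega) (by omega)
      have c1 := T.dist_comm (u := p i) (v := p (q v))
      have c2 := T.dist_comm (u := p i) (v := p (q v + 1))
      have k := key hT a.symm (w := p i) (z := v) (by omega) (by omega)
      rw [T.dist_comm (u := v)]
      omega
  have hpS : ∀ i ≤ D, p i ∈ S := by
    intro i hi
    refine hS s hs t ht _ ?_
    have h1 := hp 0 i (by omega) hi
    have h2 := hp i D hi le_rfl
    rw [p0] at h1; rw [pD] at h2
    omega
  have hqp : ∀ i ≤ D, q (p i) = i ∧ T.dist (p i) (p (q (p i))) = 0 := by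
    intro i hi
    have := hd (p i) i hi
    rw [dist_self] at this
    omega
  refine ⟨D, p, q, fun v => T.dist v (p (q v)), hpS, hq, ?_, ?_, fun v _ => hd v, ?_, ?_, ?_,
    hdiam, fun i hi => (hqp i hi).1, fun i hi => (hqp i hi).2⟩
  · intro v hv
    have h1 := hd v D le_rfl
    have h2 := hdiam _ (hpS D le_rfl) v hv
    have := hq v
    show T.dist v (p (q v)) ≤ _
    omega
  · intro v hv
    have h1 := hd v 0 (by omega)
    have h2 := hdiam _ (hpS 0 (by omega)) v hv
    have := hq v
    show T.dist v (p (q v)) + _ ≤ _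
    omega
  · intro v hv
    show T.dist v (p (q v)) + 1 ≤ _
    obtain ⟨g, g0, g1, hg⟩ := geo hT v (p (q v))
    rw [← Finset.card_range (T.dist v (p (q v)) + 1)]
    refine Finset.card_le_card_of_injOn g ?_ ?_
    · intro j hj
      have hj : j ≤ T.dist v (p (q v)) := by
        simp at hj; omega
      have d1 := hg 0 j (by omega) hj
      have d2 := hg j _ hj le_rfl
      rw [g0] at d1; rw [g1] at d2
      simp only [Finset.coe_filter, Set.mem_ofPred_eq]
      refine ⟨hS v hv _ (hpS _ (hq v)) _ (by omega), ?_⟩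
      have t := hT.connected.dist_triangle (u := v) (v := g j) (w := p (q (g j)))
      have e1 := hd v (q (g j)) (hq _)
      have e2 := hd (g j) (q v) (hq _)
      rw [T.dist_comm] at e1 e2
      omega
    · intro i hi j hj hij
      have hi : i ≤ T.dist v (p (q v)) := by
        simp at hi; omega
      have hj : j ≤ T.dist v (p (q v)) := by
        simp at hj; omega
      have d1 := hg 0 j (by omega) hj
      have d2 := hg 0 i (by omega) hi
      rw [hij] at d2
      omega
  · intro i
    rcases Nat.lt_or_ge i D with hi | hi
    · convert conv_half hT hS (hadj i hi) using 3 with v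
      have e1 := hd v i hi.le
      have e2 := hd v (i+1) hi
      rw [T.dist_comm] at e1 e2
      omega
    · rw [Finset.filter_true_of_mem (fun v _ => (hq v).trans hi)]
      exact hS
  · intro i
    rcases Nat.eq_zero_or_pos i with rfl | hi0
    · simpa using hS
    rcases Nat.lt_or_ge D i with hi | hi
    · rw [Finset.filter_false_of_mem (fun v _ => by have := hq v; omega)]
      intro u hu; simp at hu
    · obtain ⟨m, rfl⟩ : ∃ m, i = m + 1 := ⟨i - 1, by omega⟩
      convert conv_half hT hS (hadj m hi).symm using 3 with v
      have e1 := hd v m (by omega)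
      have e2 := hd v (m+1) hi
      rw [T.dist_comm] at e1 e2
      omega


theorem IsCoord.rev {S : Finset V} {D p q e} (h : IsCoord T S D p q e) :
    IsCoord T S D (fun i => p (D - i)) (fun v => D - q v) e where
  pS i _ := h.pS _ (by omega)
  qD v := by omega
  eq v hv := by have := h.eqD v hv; omega
  eqD v hv := by have := h.eqD v hv; have := h.eq v hv; omega
  dist v hv i hi := by
    have := h.dist v hv (D - i) (by omega)
    have := h.qD v
    omega
  fib v hv := by
    rw [Finset.filter_congr (q := fun z => q z = q v)]
    · exact h.fib v hv
    intro z _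
    have := h.qD v
    have := h.qD z
    omega
  convL i := by
    rw [Finset.filter_congr (q := fun z => D - i ≤ q z)]
    · exact h.convR _
    intro z _
    have := h.qD z
    omega
  convR i := by
    rcases Nat.lt_or_ge D i with hi | hi
    · rw [Finset.filter_false_of_mem (fun v _ => by omega)]
      intro u hu; simp at hu
    rw [Finset.filter_congr (q := fun z => q z ≤ D - i)]
    · exact h.convL _
    intro z _
    have := h.qD z
    omega
  diam := h.diam
  qp i hi := by have := h.qp (D - i) (by omega); omega
  ep i hi := h.ep (D - i) (by omega)

theorem IsCoord.card_sum {S : Finset V} {D p q e} (h : IsCoord T S D p q e) :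
    S.card = ∑ j ∈ Finset.range (D+1), (S.filter fun z => q z = j).card :=
  Finset.card_eq_sum_card_fiberwise (fun v _ => by have := h.qD v; simp; omega)

theorem IsCoord.card2 {S : Finset V} {D p q e} (h : IsCoord T S D p q e) {u v : V}
    (hu : u ∈ S) (hv : v ∈ S) (huv : q u ≠ q v) : D + 1 + e u + e v ≤ S.card := by
  have h1 : ∑ j ∈ Finset.range (D+1), (1 + (if j = q u then e u else 0) +
      (if j = q v then e v else 0)) = D + 1 + e u + e v := by
    have := h.qD u
    have := h.qD v
    simp only [Finset.sum_add_distrib, Finset.sum_ite_eq', Finset.mem_range]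
    rw [if_pos (by omega), if_pos (by omega)]
    simp
  rw [h.card_sum, ← h1]
  apply Finset.sum_le_sum
  intro j hj
  have hj : j ≤ D := by simp at hj; omega
  have f1 := h.fib u hu
  have f2 := h.fib v hv
  have f3 := h.fib (p j) (h.pS j hj)
  rw [h.qp j hj, h.ep j hj] at f3
  split_ifs with c1 c2 c2
  · omega
  · rw [c1]; omega
  · rw [c2]; omega
  · omega

theorem IsCoord.card1 {S : Finset V} {D p q e} (h : IsCoord T S D p q e) {u : V}
    (hu : u ∈ S) : D + 1 + e u ≤ S.card := by
  by_cases hD : D = 0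
  · have f1 := h.fib u hu
    have := Finset.card_le_card (Finset.filter_subset (fun z => q z = q u) S)
    omega
  by_cases h0 : q u = 0
  · have := h.card2 hu (h.pS D le_rfl) (by rw [h.qp D le_rfl]; omega)
    omega
  · have := h.card2 hu (h.pS 0 (by omega)) (by rw [h.qp 0 (by omega)]; omega)
    omega

theorem IsCoord.rad {S : Finset V} {D p q e} (h : IsCoord T S D p q e) (hS : Conv T S) {j : ℕ}
    (hj : D ≤ 2 * j) : Rad T S j := by
  refine ⟨hS, p (D / 2), h.pS _ (by omega), fun v hv => ?_⟩
  have := h.dist v hv (D/2) (by omega)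
  have := h.eq v hv
  have := h.eqD v hv
  omega

theorem rad_of_card (hT : T.IsTree) {S : Finset V} (hS : Conv T S) (hne : S.Nonempty) {j : ℕ}
    (hj : S.card ≤ 2 * j + 1) : Rad T S j := by
  obtain ⟨D, p, q, e, h⟩ := exists_coord hT hS hne
  have := h.card1 (h.pS 0 (by omega))
  exact h.rad hS (by omega)

theorem IsCoord.half {S : Finset V} {D p q e} (h : IsCoord T S D p q e) {x y : ℕ}
    (hD : 2 * x < D) (hyx : y ≤ x) (hw : S.card ≤ 2 * x + 2 * y + 2) :
    (∃ A B : Finset V, Disjoint A B ∧ A ∪ B = S ∧ Rad T A x ∧ Rad T B y) ∨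
    ∃ u ∈ S, 2 * y + 1 ≤ q u + e u ∧ 2 * x + 1 + q u ≤ D + e u := by
  obtain ⟨v0, hv0, hmin⟩ := (S.filter fun v => 2 * y + 1 ≤ q v + e v).exists_min_image q
    ⟨p D, by
      rw [Finset.mem_filter, h.qp D le_rfl]
      exact ⟨h.pS D le_rfl, by omega⟩⟩
  rw [Finset.mem_filter] at hv0
  obtain ⟨hv0S, hv0⟩ := hv0
  have hP0 := h.eq v0 hv0S
  have hPD := h.qD v0
  by_cases hall : ∀ v ∈ S, q v0 ≤ q v → D + e v ≤ 2 * x + q v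
  · left
    refine ⟨S.filter fun v => q v0 ≤ q v, S.filter fun v => q v ≤ q v0 - 1, ?_, ?_, ?_, ?_⟩
    · rw [Finset.disjoint_left]
      intro a ha hb
      rw [Finset.mem_filter] at ha hb
      omega
    · ext a
      simp only [Finset.mem_union, Finset.mem_filter]
      constructor
      · rintro (h | h) <;> exact h.1
      · intro ha
        by_cases hq : q v0 ≤ q a
        · exact Or.inl ⟨ha, hq⟩
        · exact Or.inr ⟨ha, by omega⟩
    · refine ⟨h.convR _, p (D - min x (D - q v0)), ?_, ?_⟩
      · rw [Finset.mem_filter, h.qp _ (by omega)]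
        exact ⟨h.pS _ (by omega), by omega⟩
      · intro v hv
        rw [Finset.mem_filter] at hv
        have := h.dist v hv.1 (D - min x (D - q v0)) (by omega)
        have := h.eq v hv.1
        have := h.eqD v hv.1
        have := hall v hv.1 hv.2
        omega
    · refine ⟨h.convL _, p (min y (q v0 - 1)), ?_, ?_⟩
      · rw [Finset.mem_filter, h.qp _ (by omega)]
        exact ⟨h.pS _ (by omega), by omega⟩
      · intro v hv
        rw [Finset.mem_filter] at hv
        have := h.dist v hv.1 (min y (q v0 - 1)) (by omega)
        have := h.eq v hv.1
        have := h.eqD v hv.1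
        have : ¬ (2 * y + 1 ≤ q v + e v) := by
          intro hc
          have := hmin v (by rw [Finset.mem_filter]; exact ⟨hv.1, hc⟩)
          omega
        omega
  · right
    push Not at hall
    obtain ⟨v1, hv1, hq1, h1⟩ := hall
    by_cases hqq : q v0 = q v1
    · by_cases hee : e v0 ≤ e v1
      · exact ⟨v1, hv1, by omega, by omega⟩
      · exact ⟨v0, hv0S, by omega, by omega⟩
    · have := h.card2 hv0S hv1 hqq
      omega

theorem pair (hT : T.IsTree) {S : Finset V} (hS : Conv T S) {a b : V} (ha : a ∈ S) (hb : b ∈ S)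
    {h x y : ℕ} (hab : h ≤ T.dist a b) (hyx : y ≤ x) (hw : S.card ≤ 2 * x + 2 * y + 2)
    (hw2 : 2 * S.card ≤ 4 * x + h + 3) :
    Rad T S x ∨ ∃ A B : Finset V, Disjoint A B ∧ A ∪ B = S ∧ Rad T A x ∧ Rad T B y := by
  obtain ⟨D, p, q, e, hc⟩ := exists_coord hT hS ⟨a, ha⟩
  by_cases hD : D ≤ 2 * x
  · exact Or.inl (hc.rad hS hD)
  right
  rcases hc.half (by omega) hyx hw with h1 | ⟨u, hu, u1, u2⟩
  · exact h1
  rcases hc.rev.half (by omega) hyx hw with h1 | ⟨v, hv, v1, v2⟩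
  · exact h1
  exfalso
  have := hc.qD u
  have := hc.qD v
  have := hc.diam a ha b hb
  have := hc.card1 hu
  have := hc.card1 hv
  by_cases hq : q u = q v
  · omega
  · have := hc.card2 hu hv hq
    omega

theorem cut (hT : T.IsTree) {S : Finset V} (hS : Conv T S) {ρ z : V} (hρ : ρ ∈ S) (hz : z ∈ S)
    {h : ℕ} (hmax : ∀ u ∈ S, T.dist ρ u ≤ T.dist ρ z) (hh : h + 1 ≤ T.dist ρ z) :
    ∃ (A B : Finset V) (v : V), Disjoint A B ∧ A ∪ B = S ∧ Conv T A ∧ Conv T B ∧ ρ ∈ B ∧ v ∈ A ∧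
      (∀ u ∈ A, T.dist v u ≤ h) ∧ ∃ z ∈ A, h ≤ T.dist v z := by
  obtain ⟨p, p0, pM, hp⟩ := geo hT ρ z
  obtain ⟨m, hm⟩ : ∃ m, T.dist ρ z = m + 1 + h := ⟨T.dist ρ z - h - 1, by omega⟩
  rw [hm] at pM hp
  have hadj : T.Adj (p m) (p (m+1)) := by
    rw [← dist_eq_one_iff_adj, hp m (m+1) (by omega) (by omega)]; omega
  have d1 := hp 0 m (by omega) (by omega)
  have d2 := hp 0 (m+1) (by omega) (by omega)
  have d3 := hp (m+1) (m+1+h) (by omega) (by omega)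
  have d4 := hp m (m+1+h) (by omega) (by omega)
  have d5 := hp m (m+1) (by omega) (by omega)
  have c3 := T.dist_comm (u := p (m+1)) (v := z)
  have c4 := T.dist_comm (u := p m) (v := z)
  have c5 := T.dist_comm (u := p m) (v := p (m+1))
  rw [p0] at d1 d2
  rw [pM] at d3 d4
  have hvS : p (m+1) ∈ S := hS ρ hρ z hz _ (by omega)
  refine ⟨S.filter fun w => T.dist w (p (m+1)) < T.dist w (p m),
    S.filter fun w => T.dist w (p m) < T.dist w (p (m+1)), p (m+1), ?_, ?_,
    conv_half hT hS hadj.symm, conv_half hT hS hadj, ?_, ?_, ?_, z, ?_, ?_⟩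
  · rw [Finset.disjoint_left]
    intro a ha hb
    rw [Finset.mem_filter] at ha hb
    omega
  · ext a
    simp only [Finset.mem_union, Finset.mem_filter]
    have := hT.dist_ne_of_adj a hadj
    constructor
    · rintro (h | h) <;> exact h.1
    · intro ha
      by_cases hq : T.dist a (p (m+1)) < T.dist a (p m)
      · exact Or.inl ⟨ha, hq⟩
      · exact Or.inr ⟨ha, by omega⟩
  · rw [Finset.mem_filter]; exact ⟨hρ, by omega⟩
  · rw [Finset.mem_filter]
    refine ⟨hvS, ?_⟩
    rw [dist_self]; omega
  · intro u hu
    rw [Finset.mem_filter] at hu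
    have k := key hT hadj (w := ρ) (z := u) (by omega) hu.2
    have := hmax u hu.1
    omega
  · rw [Finset.mem_filter]; exact ⟨hz, by omega⟩
  · omega

inductive Good (T : SimpleGraph V) : Multiset (Finset V) → Finset ℕ → Prop
  | nil (I : Finset ℕ) : Good T 0 I
  | single {S : Finset V} {i : ℕ} {D : Multiset (Finset V)} {I : Finset ℕ} :
      Rad T S i → i ∈ I → Good T D (I.erase i) → Good T (S ::ₘ D) I
  | split {A B : Finset V} {D : Multiset (Finset V)} {I : Finset ℕ} :
      Disjoint A B → Good T (A ::ₘ B ::ₘ D) I → Good T ((A ∪ B) ::ₘ D) I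

theorem Good.mono {D : Multiset (Finset V)} {I : Finset ℕ} (h : Good T D I) :
    ∀ {J : Finset ℕ}, I ⊆ J → Good T D J := by
  induction h with
  | nil I => intro J _; exact Good.nil J
  | single h1 h2 _ ih =>
    intro J hJ
    exact Good.single h1 (hJ h2) (ih (Finset.erase_subset_erase _ hJ))
  | split h1 _ ih => intro J hJ; exact Good.split h1 (ih hJ)

theorem Good.extract {D : Multiset (Finset V)} {I : Finset ℕ} (h : Good T D I) :
    ∃ S : ℕ → Finset V, (∀ i, (S i).Nonempty → i ∈ I ∧ Rad T (S i) i) ∧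
      ∀ v, ∑ i ∈ I, (if v ∈ S i then 1 else 0) =
        (D.map (fun A => if v ∈ A then 1 else 0)).sum := by
  induction h with
  | nil I => exact ⟨fun _ => ∅, by simp, by simp⟩
  | @single A i D I h1 h2 _ ih =>
    obtain ⟨S, hS, hv⟩ := ih
    refine ⟨Function.update S i A, ?_, ?_⟩
    · intro j hj
      by_cases hji : j = i
      · subst hji
        rw [Function.update_self]
        exact ⟨h2, h1⟩
      · rw [Function.update_of_ne hji] at hj ⊢
        exact ⟨Finset.mem_of_mem_erase (hS j hj).1, (hS j hj).2⟩
    · intro v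
      rw [← Finset.add_sum_erase I _ h2, Multiset.map_cons, Multiset.sum_cons, ← hv v,
        Function.update_self]
      congr 1
      apply Finset.sum_congr rfl
      intro j hj
      rw [Function.update_of_ne (Finset.ne_of_mem_erase hj)]
  | @split A B D I h1 _ ih =>
    obtain ⟨S, hS, hv⟩ := ih
    refine ⟨S, hS, fun v => ?_⟩
    rw [hv v]
    simp only [Multiset.map_cons, Multiset.sum_cons, ← add_assoc]
    congr 1
    rw [Finset.disjoint_left] at h1
    have := @h1 v
    by_cases hA : v ∈ A <;> by_cases hB : v ∈ B <;> simp_all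

theorem conv_walk (hT : T.IsTree) {S : Finset V} (hS : Conv T S) {u : V} (hu : u ∈ S) (n : ℕ) :
    ∀ v, ∀ hv : v ∈ S, T.dist u v = n →
      ∃ w : (T.induce (S : Set V)).Walk ⟨u, hu⟩ ⟨v, hv⟩, w.length = n := by
  induction n with
  | zero =>
    intro v hv h
    obtain rfl : u = v := (hT.connected u v).dist_eq_zero_iff.mp h
    exact ⟨Walk.nil, rfl⟩
  | succ n ih =>
    intro v hv h
    obtain ⟨p, p0, pM, hp⟩ := geo hT u v
    rw [h] at hp pM
    have d1 := hp 0 n (by omega) (by omega)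
    have d2 := hp n (n+1) (by omega) (by omega)
    rw [p0] at d1
    rw [pM] at d2
    have hx : p n ∈ S := hS u hu v hv _ (by omega)
    obtain ⟨w, hw⟩ := ih (p n) hx (by omega)
    have hadj : T.Adj (p n) v := by rw [← dist_eq_one_iff_adj, d2]; omega
    have hadj' : (T.induce (S : Set V)).Adj ⟨p n, hx⟩ ⟨v, hv⟩ := hadj
    exact ⟨w.concat hadj', by rw [Walk.length_concat, hw]⟩

theorem finish [Fintype V] (hT : T.IsTree) (k : ℕ)
    (h : Good T {Finset.univ} (Finset.Ico 0 k)) :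
    ∃ S : Fin k → Set V,
      (∀ v : V, ∃! i : Fin k, v ∈ S i) ∧
      ∀ i : Fin k, (S i).Nonempty →
        (T.induce (S i)).Connected ∧
        ∃ u : ↥(S i), ∀ v : ↥(S i), (T.induce (S i)).dist u v ≤ (i : ℕ) := by
  obtain ⟨S, hS, hv⟩ := h.extract
  refine ⟨fun i => (S i : Set V), ?_, ?_⟩
  · intro v
    have h1 := hv v
    rw [← Finset.card_filter] at h1
    simp only [Multiset.map_singleton, Finset.mem_univ, if_true, Multiset.sum_singleton] at h1
    rw [Finset.card_eq_one] at h1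
    obtain ⟨a, ha⟩ := h1
    have hmem : ∀ i, (i < k ∧ v ∈ S i) ↔ i = a := by
      intro i
      have := Finset.ext_iff.mp ha i
      simpa using this
    have haa := (hmem a).mpr rfl
    refine ⟨⟨a, haa.1⟩, haa.2, ?_⟩
    intro j hj
    exact Fin.ext ((hmem j).mp ⟨j.2, hj⟩)
  · intro i hi
    obtain ⟨_, hconv, c, hc, hd⟩ := hS i hi
    constructor
    · rw [connected_iff_exists_forall_reachable]
      refine ⟨⟨c, hc⟩, fun w => ?_⟩
      obtain ⟨w, hw⟩ := w
      obtain ⟨p, _⟩ := conv_walk hT hconv hc _ w hw rfl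
      exact ⟨p⟩
    · refine ⟨⟨c, hc⟩, fun w => ?_⟩
      obtain ⟨w, hw⟩ := w
      obtain ⟨p, hp⟩ := conv_walk hT hconv hc _ w hw rfl
      have h1 := dist_le p
      have h2 := hd w hw
      simp only at h1 ⊢
      omega

def wt (D : Multiset (Finset V)) : ℕ := (D.map Finset.card).sum

theorem wt_cons (S : Finset V) (D : Multiset (Finset V)) : wt (S ::ₘ D) = S.card + wt D := by
  simp [wt]

def Piece (T : SimpleGraph V) (h : ℕ) (S : Finset V) : Prop :=
  Conv T S ∧ ∃ u ∈ S, ∃ v ∈ S, h ≤ T.dist u v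

theorem Piece.mono {h h' : ℕ} {S : Finset V} (hS : Piece T h S) (hh : h' ≤ h) : Piece T h' S := by
  obtain ⟨h1, u, hu, v, hv, hd⟩ := hS
  exact ⟨h1, u, hu, v, hv, hh.trans hd⟩

theorem Piece.card (hT : T.IsTree) {h : ℕ} {S : Finset V} (hS : Piece T h S) :
    h + 1 ≤ S.card := by
  obtain ⟨h1, u, hu, v, hv, hd⟩ := hS
  obtain ⟨D, p, q, e, hc⟩ := exists_coord hT h1 ⟨u, hu⟩
  have := hc.card1 hu
  have := hc.diam u hu v hv
  omega

theorem Piece.rad (hT : T.IsTree) {h : ℕ} {S : Finset V} (hS : Piece T h S) {j : ℕ}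
    (hj : S.card ≤ 2 * j + 1) : Rad T S j := by
  obtain ⟨h1, u, hu, v, hv, hd⟩ := hS
  exact rad_of_card hT h1 ⟨u, hu⟩ hj

theorem use_single {S : Finset V} {D : Multiset (Finset V)} {lo r : ℕ} (h : Rad T S r)
    (hlo : lo ≤ r) (hD : Good T D (Finset.Ico lo r)) : Good T (S ::ₘ D) (Finset.Ico lo (r+1)) := by
  refine Good.single h (by simp; omega) (hD.mono ?_)
  intro a ha
  simp at ha ⊢
  omega

theorem use_pair (hT : T.IsTree) {S : Finset V} {D : Multiset (Finset V)} {lo x h : ℕ}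
    (hP : Piece T h S) (hlo : lo < x) (hw : S.card ≤ 2 * x + 2 * lo + 2)
    (hw2 : 2 * S.card ≤ 4 * x + h + 3)
    (hD : Good T D (Finset.Ico (lo+1) x)) : Good T (S ::ₘ D) (Finset.Ico lo (x+1)) := by
  obtain ⟨h1, u, hu, v, hv, hd⟩ := hP
  rcases pair hT h1 hu hv hd hlo.le hw hw2 with h2 | ⟨A, B, hAB, rfl, hA, hB⟩
  · refine use_single h2 hlo.le (hD.mono ?_)
    intro a ha
    simp at ha ⊢
    omega
  · refine Good.split hAB (use_single hA hlo.le (Good.single hB (by simp; omega) (hD.mono ?_)))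
    intro a ha
    simp at ha ⊢
    omega

theorem exists_largest {D : Multiset (Finset V)} (hD : D ≠ 0) :
    ∃ P D', D = P ::ₘ D' ∧ ∀ Q ∈ D', Q.card ≤ P.card := by
  obtain ⟨P, hP, hmax⟩ := D.exists_max_image Finset.card hD
  obtain ⟨D', rfl⟩ := Multiset.exists_cons_of_mem hP
  exact ⟨P, D', rfl, fun Q hQ => hmax Q (Multiset.mem_cons_of_mem hQ)⟩

theorem wt_ge {D : Multiset (Finset V)} {a : ℕ} (h : ∀ P ∈ D, a ≤ P.card) :
    D.card * a ≤ wt D := by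
  induction D using Multiset.induction with
  | empty => simp [wt]
  | cons P D ih =>
    rw [wt_cons, Multiset.card_cons]
    have h1 := h P (Multiset.mem_cons_self _ _)
    have h2 := ih (fun Q hQ => h Q (Multiset.mem_cons_of_mem hQ))
    nlinarith

theorem ar_N {N m lo W : ℤ} (hm : 0 ≤ m) (hlo : 0 ≤ lo) (hlm : lo ≤ m)
    (H : 4 * W + 10 * m + 17 + 2 * lo + (m + lo) ^ 2 ≤ 4 * m ^ 2) (h : N * (m + 1) ≤ W) :
    4 * N + 2 * lo ≤ 3 * m ∧ N + lo ≤ m := by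
  constructor
  · by_contra hc
    push Not at hc
    nlinarith
  · by_contra hc
    push Not at hc
    nlinarith

theorem ar_a {N i m lo w W : ℤ} (hm : 0 ≤ m) (hi : 0 ≤ i) (hlo : 0 ≤ lo)
    (H : 4 * W + 10 * m + 17 + 2 * lo + (m + lo) ^ 2 ≤ 4 * m ^ 2)
    (h1 : (i + 1) * w + (N - i - 1) * (m + 1) ≤ W) (h4 : m ≤ 4 * i) (h2 : 2 * i ≤ m)
    (hN : i + m + 1 ≤ 2 * N + lo) (hw : 2 * m - 2 * i ≤ w) : False := by
  have a1 : (i + 1) * (2 * m - 2 * i) ≤ (i + 1) * w := by gcongr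
  have a2 : (m - i - lo - 1) * (m + 1) ≤ 2 * (N - i - 1) * (m + 1) := by
    apply mul_le_mul_of_nonneg_right <;> omega
  have a3 : 0 ≤ (4 * i - m) * (m - 2 * i) := mul_nonneg (by omega) (by omega)
  nlinarith [sq_nonneg lo]

theorem ar_b {N i c m lo w W : ℤ} (hm : 0 ≤ m) (hc : 0 ≤ c) (hic : c ≤ i) (hlo : 0 ≤ lo)
    (H : 4 * W + 10 * m + 17 + 2 * lo + (m + lo) ^ 2 ≤ 4 * m ^ 2)
    (h1 : (i + 1) * w + (N - i - 1) * (m + 1) ≤ W) (h4 : m ≤ 4 * c) (h2 : 2 * c ≤ m)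
    (hwm : m + 1 ≤ w)
    (hN : c + m ≤ 2 * N + lo) (hw : 2 * m + 2 * lo - 2 * c + 1 ≤ w) : False := by
  have a0 : (i - c) * (m + 1) ≤ (i - c) * w := mul_le_mul_of_nonneg_left hwm (by omega)
  have a1 : (c + 1) * (2 * m + 2 * lo - 2 * c + 1) ≤ (c + 1) * w := by gcongr
  have a2 : (m - c - lo - 2) * (m + 1) ≤ 2 * (N - c - 1) * (m + 1) := by
    apply mul_le_mul_of_nonneg_right <;> omega
  have a3 : 0 ≤ (4 * c - m) * (m - 2 * c) := mul_nonneg (by omega) (by omega)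
  have a4 : 0 ≤ c * lo := by positivity
  nlinarith [sq_nonneg lo]

theorem ar_c {i m lo w W : ℤ} (hm : 0 ≤ m) (hi : 0 ≤ i) (hlo : 0 ≤ lo)
    (H : 4 * W + 10 * m + 17 + 2 * lo + (m + lo) ^ 2 ≤ 4 * m ^ 2)
    (h1 : (i + 1) * w ≤ W) (h4 : m ≤ 2 * i) (h2 : 4 * i ≤ 3 * m)
    (hw : 5 * m - 4 * i ≤ 2 * w) : False := by
  have a1 : (i + 1) * (5 * m - 4 * i) ≤ (i + 1) * (2 * w) := by gcongr
  have a3 : 0 ≤ (2 * i - m) * (3 * m - 4 * i) := mul_nonneg (by omega) (by omega)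
  nlinarith [sq_nonneg lo, mul_nonneg hm hlo]

theorem final_aux (hT : T.IsTree) (lo m W N : ℕ) (hlm : lo ≤ m)
    (H : 4 * W + 10 * m + 17 + 2 * lo + (m + lo) ^ 2 ≤ 4 * m ^ 2) (hNW : N * (m + 1) ≤ W) (c : ℕ)
    (hc : c = max (m / 4) (2 * N + lo - m)) (j : ℕ) :
    ∀ (i : ℕ) (D : Multiset (Finset V)), i + j = N → D.card = j →
      (∀ P ∈ D, Piece T m P ∧ 2 * P.card ≤ 3 * m ∧ i * P.card + wt D ≤ W) →
      Good T D (Finset.Ico (lo + (i - c)) (m - i)) := by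
  zify at H hNW hlm
  obtain ⟨n1, n2⟩ := ar_N (by positivity) (by positivity) hlm H hNW
  induction j with
  | zero =>
    intro i D _ hD _
    rw [Multiset.card_eq_zero] at hD
    subst hD
    exact Good.nil _
  | succ j ih =>
    intro i D hij hD hall
    obtain ⟨P, D', rfl, hmax⟩ := exists_largest (D := D) (by rintro rfl; simp at hD)
    rw [Multiset.card_cons] at hD
    obtain ⟨hP, hP2, hPW⟩ := hall P (Multiset.mem_cons_self _ _)
    have hPc := hP.card hT
    have hwt : j * (m + 1) ≤ wt D' := by
      have := wt_ge (D := D') (a := m + 1)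
        (fun Q hQ => (hall Q (Multiset.mem_cons_of_mem hQ)).1.card hT)
      rwa [show D'.card = j by omega] at this
    rw [wt_cons] at hPW
    have hrec := ih (i + 1) D' (by omega) (by omega) (fun Q hQ => by
      obtain ⟨q1, q2, q3⟩ := hall Q (Multiset.mem_cons_of_mem hQ)
      refine ⟨q1, q2, ?_⟩
      have := hmax Q hQ
      nlinarith)
    have h1 : ((i:ℤ) + 1) * P.card + ((N:ℤ) - i - 1) * (m + 1) ≤ W := by
      have e : (N:ℤ) - i - 1 = j := by omega
      rw [e]
      zify at hPW hwt
      linarith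
    have h1' : ((i:ℤ) + 1) * P.card ≤ W := by
      have : 0 ≤ ((N:ℤ) - i - 1) * (m + 1) := mul_nonneg (by omega) (by omega)
      linarith
    have hm' : m - i = (m - (i + 1)) + 1 := by omega
    rw [hm']
    by_cases hic : i < c
    · have hw : P.card ≤ 2 * (m - (i+1)) + 1 := by
        by_contra hcon
        exact ar_a (by omega) (by omega) (by omega) H h1 (by omega) (by omega) (by omega)
          (by omega)
      refine use_single (hP.rad hT hw) (by omega) ?_
      convert hrec using 2
      omega
    · have hb : P.card ≤ 2 * (m - (i+1)) + 2 * (lo + (i - c)) + 2 := by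
        by_contra hcon
        exact ar_b (c := c) (by omega) (by omega) (by omega) (by omega) H h1 (by omega) (by omega)
          (by omega) (by omega) (by omega)
      have hcc : 2 * P.card ≤ 4 * (m - (i+1)) + m + 3 := by
        by_contra hcon
        exact ar_c (by omega) (by omega) (by omega) H h1' (by omega) (by omega) (by omega)
      refine use_pair hT hP (by omega) hb hcc ?_
      convert hrec using 2
      omega

theorem final (hT : T.IsTree) (lo m : ℕ) (D : Multiset (Finset V)) (hlm : lo ≤ m)
    (H : 4 * wt D + 10 * m + 17 + 2 * lo + (m + lo) ^ 2 ≤ 4 * m ^ 2)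
    (hD : ∀ P ∈ D, Piece T m P ∧ 2 * P.card ≤ 3 * m) : Good T D (Finset.Ico lo m) := by
  have := final_aux hT lo m (wt D) D.card hlm H
    (wt_ge fun P hP => (hD P hP).1.card hT) _ rfl D.card 0 D (by omega) rfl
    (fun P hP => ⟨(hD P hP).1, (hD P hP).2, by omega⟩)
  simpa using this

def MainAt (T : SimpleGraph V) (r : ℕ) : Prop :=
  ∀ (lo : ℕ) (B : Finset V) (ρ : V) (D : Multiset (Finset V)), ρ ∈ B → Conv T B →
    (∀ P ∈ D, Piece T (r - 1) P ∧ 2 * P.card + 3 ≤ 3 * r) →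
    4 * (B.card + wt D) + 16 * r + (r + lo) ^ 2 ≤ 4 * r ^ 2 →
    Good T (B ::ₘ D) (Finset.Ico lo r)

theorem ar_q {r r0 w : ℤ} (hr : 0 ≤ r) (hr0 : 1 ≤ r0) (hw : r0 ≤ w)
    (h1 : 4 * r + r0 - 1 ≤ 2 * w) (h2 : 2 * w + 3 ≤ 3 * r0)
    (h3 : 4 * ((r0 - r) * w) + 16 * r0 ≤ 3 * r0 ^ 2) : False := by
  by_cases h : r0 ≤ 4 * r
  · have a1 : (r0 - r) * (4 * r + r0 - 1) ≤ (r0 - r) * (2 * w) :=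
      mul_le_mul_of_nonneg_left h1 (by omega)
    have a2 : 0 ≤ (4 * r - r0) * (r0 - 2 * r) := mul_nonneg (by omega) (by omega)
    nlinarith
  · have a1 : (r0 - r) * r0 ≤ (r0 - r) * w := mul_le_mul_of_nonneg_left hw (by omega)
    nlinarith

theorem queue (hT : T.IsTree) (r0 : ℕ) (hM : ∀ r < r0, MainAt T r) (r : ℕ) :
    r < r0 → ∀ (lo : ℕ) (B : Finset V) (ρ : V) (D : Multiset (Finset V)), ρ ∈ B → Conv T B →
    (∀ P ∈ D, Piece T (r0 - 1) P ∧ 2 * P.card + 3 ≤ 3 * r0 ∧ P.card ≤ 2 * (r + lo) ∧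
      4 * ((r0 - r) * P.card + wt D) + 16 * r0 ≤ 3 * r0 ^ 2) →
    4 * (B.card + wt D) + 16 * r + (r + lo) ^ 2 ≤ 4 * r ^ 2 →
    Good T (B ::ₘ D) (Finset.Ico lo r) := by
  induction r with
  | zero =>
    intro _ lo B ρ D hρ _ _ hinv
    have : 0 < B.card := Finset.card_pos.mpr ⟨ρ, hρ⟩
    exfalso
    nlinarith
  | succ r ih =>
    intro hr lo B ρ D hρ hB hall hinv
    have hBc : 0 < B.card := Finset.card_pos.mpr ⟨ρ, hρ⟩
    by_cases hlight : ∀ P ∈ D, 2 * P.card + 3 ≤ 3 * (r + 1)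
    · exact hM (r+1) hr lo B ρ D hρ hB
        (fun P hP => ⟨(hall P hP).1.mono (by omega), hlight P hP⟩) hinv
    have hD0 : D ≠ 0 := by
      rintro rfl
      simp at hlight
    obtain ⟨P, D', rfl, hmax⟩ := exists_largest hD0
    have hheavy : 3 * (r + 1) < 2 * P.card + 3 := by
      by_contra hcon
      apply hlight
      intro Q hQ
      rcases Multiset.mem_cons.mp hQ with rfl | hQ
      · omega
      · have := hmax Q hQ
        omega
    obtain ⟨p1, p2, p3, p4⟩ := hall P (Multiset.mem_cons_self _ _)
    have pc := p1.card hT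
    rw [wt_cons] at p4 hinv
    have hlor : lo < r := by
      by_contra hcon
      push Not at hcon
      nlinarith
    have hsub : r0 - r = (r0 - (r + 1)) + 1 := by omega
    have hist : ∀ Q ∈ D', 4 * ((r0 - r) * Q.card + wt D') + 16 * r0 ≤ 3 * r0 ^ 2 := by
      intro Q hQ
      have := hmax Q hQ
      have h1 : (r0 - r) * Q.card ≤ (r0 - r) * P.card := by gcongr
      rw [hsub] at h1 ⊢
      nlinarith
    rw [Multiset.cons_swap]
    by_cases hs : P.card ≤ 2 * r
    · refine use_single (p1.rad hT (by omega)) hlor.le ?_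
      refine ih (by omega) lo B ρ D' hρ hB ?_ ?_
      · intro Q hQ
        obtain ⟨q1, q2, q3, q4⟩ := hall Q (Multiset.mem_cons_of_mem hQ)
        have := hmax Q hQ
        exact ⟨q1, q2, by omega, hist Q hQ⟩
      · nlinarith
    · refine use_pair hT p1 hlor (by omega) ?_ ?_
      · by_contra hcon
        push Not at hcon
        refine ar_q (r := (r:ℤ) + 1) (r0 := r0) (w := P.card) (by omega) (by omega) (by omega)
          (by omega) (by omega) ?_
        have e : ((r0 - (r + 1) : ℕ) : ℤ) = (r0:ℤ) - ((r:ℤ) + 1) := by omega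
        zify at p4
        rw [e] at p4
        nlinarith
      refine ih (by omega) (lo+1) B ρ D' hρ hB ?_ ?_
      · intro Q hQ
        obtain ⟨q1, q2, q3, q4⟩ := hall Q (Multiset.mem_cons_of_mem hQ)
        exact ⟨q1, q2, by omega, hist Q hQ⟩
      · nlinarith

theorem main_step (hT : T.IsTree) (r : ℕ) (hM : ∀ r' < r, MainAt T r') (n : ℕ) :
    ∀ (lo : ℕ) (B : Finset V) (ρ : V) (D : Multiset (Finset V)), B.card ≤ n → ρ ∈ B → Conv T B →
    (∀ P ∈ D, Piece T (r - 1) P ∧ 2 * P.card + 3 ≤ 3 * r) →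
    4 * (B.card + wt D) + 16 * r + (r + lo) ^ 2 ≤ 4 * r ^ 2 →
    Good T (B ::ₘ D) (Finset.Ico lo r) := by
  induction n with
  | zero =>
    intro lo B ρ D hn hρ
    have : 0 < B.card := Finset.card_pos.mpr ⟨ρ, hρ⟩
    omega
  | succ n ih =>
    intro lo B ρ D hn hρ hB hall hinv
    have hBc : 0 < B.card := Finset.card_pos.mpr ⟨ρ, hρ⟩
    have hr5 : 4 < r := by
      by_contra hcon
      push Not at hcon
      nlinarith
    have hlor : lo < r := by
      by_contra hcon
      push Not at hcon
      nlinarith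
    obtain ⟨m, rfl⟩ : ∃ m, r = m + 1 := ⟨r - 1, by omega⟩
    simp only [Nat.add_sub_cancel] at hall
    obtain ⟨z, hz, hmax⟩ := B.exists_max_image (fun u => T.dist ρ u) ⟨ρ, hρ⟩
    by_cases hh : T.dist ρ z ≤ m
    · refine use_single ⟨hB, ρ, hρ, fun v hv => (hmax v hv).trans hh⟩ (by omega) ?_
      refine final hT lo m D (by omega) ?_ ?_
      · nlinarith
      · intro P hP
        exact ⟨(hall P hP).1, by have := (hall P hP).2; omega⟩
    · obtain ⟨A, C, v, hAC, rfl, hA, hC, hρC, hvA, hrad, z', hz', hd⟩ :=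
        cut hT hB hρ hz (h := m) hmax (by omega)
      have hcard := Finset.card_union_of_disjoint hAC
      have hA0 : 0 < A.card := Finset.card_pos.mpr ⟨v, hvA⟩
      have hAP : Piece T m A := ⟨hA, v, hvA, z', hz', hd⟩
      refine Good.split hAC ?_
      rw [hcard] at hinv hn
      by_cases hl : 2 * A.card + 3 ≤ 3 * (m + 1)
      · rw [Multiset.cons_swap]
        refine ih lo C ρ (A ::ₘ D) (by omega) hρC hC ?_ ?_
        · intro P hP
          rcases Multiset.mem_cons.mp hP with rfl | hP
          · exact ⟨hAP, hl⟩
          · exact hall P hP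
        · rw [wt_cons]
          linarith
      · refine use_single ⟨hA, v, hvA, hrad⟩ (by omega) ?_
        refine queue hT (m+1) hM m (by omega) lo C ρ D hρC hC ?_ ?_
        · intro P hP
          obtain ⟨q1, q2⟩ := hall P hP
          refine ⟨q1, q2, by omega, ?_⟩
          rw [show m + 1 - m = 1 by omega]
          nlinarith
        · nlinarith

theorem main (hT : T.IsTree) (r : ℕ) : MainAt T r := by
  induction r using Nat.strong_induction_on with
  | _ r ih =>
    intro lo B ρ D
    exact main_step hT r ih _ lo B ρ D le_rfl

end tree
end TP

theorem tree_partition_into_bounded_radius_subtrees {V : Type*} [Fintype V]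
    (T : SimpleGraph V) (hT : T.IsTree) (n : ℕ) (hn : n = Fintype.card V)
    (k : ℕ) (hk : 0 < k) (hnk : (n : ℝ) ≤ (3 * (k : ℝ) ^ 2 - 16 * (k : ℝ)) / 4) :
    ∃ S : Fin k → Set V,
      (∀ v : V, ∃! i : Fin k, v ∈ S i) ∧
      ∀ i : Fin k, (S i).Nonempty →
        (T.induce (S i)).Connected ∧
        ∃ u : ↥(S i), ∀ v : ↥(S i), (T.induce (S i)).dist u v ≤ (i : ℕ) := by
  subst hn
  obtain ⟨ρ⟩ := hT.connected.nonempty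
  apply TP.finish hT k
  have h := TP.main hT k 0 Finset.univ ρ 0 (Finset.mem_univ _)
    (fun _ _ _ _ _ _ => Finset.mem_univ _) (by simp) (by
      rw [Finset.card_univ]
      have h2 : 4 * (Fintype.card V : ℝ) + 16 * k + k ^ 2 ≤ 4 * (k:ℝ) ^ 2 := by linarith
      have h3 : 4 * Fintype.card V + 16 * k + k ^ 2 ≤ 4 * k ^ 2 := by exact_mod_cast h2
      simpa [TP.wt] using h3)
  simpa using h
end

section
/- If G is a finite connected simple graph of order n ≥ 1, then the burning number of G satisfies b(G) ≤ ⌈(√(8n + 1) + 1)/2⌉. -/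
open Classical in
theorem burn_aux {V : Type*} [Fintype V] (T : SimpleGraph V) (ρ : V) (p : V → V)
    (hd : ∀ v j, T.dist (p^[j] v) v ≤ j)
    (hr : ∀ v j, T.dist ρ (p^[j] v) = T.dist ρ v - j) (k : ℕ) :
    ∀ S : Finset V, (∀ v ∈ S, p v ∈ S) → 2 * S.card ≤ k * (k + 1) →
      ∃ x : ℕ → V, ∀ v ∈ S, ∃ i < k, T.dist (x i) v ≤ i := by
  induction k with
  | zero =>
    intro S _ hc
    have : S = ∅ := by rw [← Finset.card_eq_zero]; omega
    subst this
    exact ⟨fun _ => ρ, by simp⟩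
  | succ k ih =>
    intro S hS hc
    by_cases hsm : ∀ v ∈ S, T.dist ρ v ≤ k
    · exact ⟨fun _ => ρ, fun v hv => ⟨k, by omega, hsm v hv⟩⟩
    push Not at hsm
    obtain ⟨v0, hv0, hv0k⟩ := hsm
    obtain ⟨v, hv, hmax⟩ := Finset.exists_max_image S (fun w => T.dist ρ w) ⟨v0, hv0⟩
    have hvk : k < T.dist ρ v := lt_of_lt_of_le hv0k (hmax v0 hv0)
    have hit : ∀ j, p^[j] v ∈ S := by
      intro j
      induction j with
      | zero => simpa using hv
      | succ j ihj => rw [Function.iterate_succ_apply']; exact hS _ ihj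
    set u := p^[k] v with hu
    have hcard : k + 1 ≤ (S.filter (fun w => ∃ j, p^[j] w = u)).card := by
      rw [← Finset.card_range (k + 1)]
      apply Finset.card_le_card_of_injOn (fun j => p^[j] v)
      · intro j hj
        simp only [Finset.coe_range, Set.mem_Iio] at hj
        simp only [Finset.coe_filter, Set.mem_ofPred_eq]
        refine ⟨hit j, k - j, ?_⟩
        rw [← Function.iterate_add_apply, hu]
        congr 2
        omega
      · intro a ha b hb hab
        simp only [Finset.coe_range, Set.mem_Iio] at ha hb
        have := congrArg (T.dist ρ) hab
        simp only [hr] at this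
        omega
    have hsum := Finset.card_filter_add_card_filter_not (s := S) (fun w => ∃ j, p^[j] w = u)
    obtain ⟨x, hx⟩ := ih (S.filter (fun w => ¬ ∃ j, p^[j] w = u)) (by
      intro w hw
      simp only [Finset.mem_filter] at hw ⊢
      refine ⟨hS _ hw.1, fun ⟨j, hj⟩ => hw.2 ⟨j + 1, ?_⟩⟩
      rw [Function.iterate_succ_apply]; exact hj) (by nlinarith)
    refine ⟨Function.update x k u, fun w hw => ?_⟩
    by_cases hwu : ∃ j, p^[j] w = u
    · obtain ⟨j, hj⟩ := hwu
      refine ⟨k, by omega, ?_⟩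
      have h1 := hr w j
      rw [hj, hu, hr] at h1
      have h2 := hmax w hw
      have h3 := hd w j
      rw [hj] at h3
      rw [Function.update_self]
      omega
    · obtain ⟨i, hi, hiw⟩ := hx w (Finset.mem_filter.2 ⟨hw, hwu⟩)
      refine ⟨i, by omega, ?_⟩
      rwa [Function.update_of_ne (by omega)]

/-- **Theorem (Bonato–Kamali).** If `G` is a connected graph of order `n ≥ 1`, then
`b(G) ≤ ⌈(√(8n + 1) + 1)/2⌉`. -/
theorem burningNumber_connected_le_sqrt_two_n {V : Type*} [Fintype V] (T : SimpleGraph V)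
    (hT : T.Connected) (n : ℕ) (hn : n = Fintype.card V) (hn1 : 1 ≤ n) :
    burningNumber T ≤ ⌈(Real.sqrt (8 * (n : ℝ) + 1) + 1) / 2⌉₊ := by
  have hne := hT.nonempty
  let ρ : V := Classical.arbitrary V
  have hp : ∀ v, ∃ w, T.dist w v ≤ 1 ∧ T.dist ρ w = T.dist ρ v - 1 := by
    intro v
    by_cases h0 : T.dist ρ v = 0
    · exact ⟨v, by simp, by omega⟩
    obtain ⟨w, hw⟩ := hT.exists_walk_length_eq_dist v ρ
    cases w with
    | nil => simp at h0
    | @cons _ b _ hadj q =>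
      refine ⟨b, ?_, ?_⟩
      · rw [SimpleGraph.dist_eq_one_iff_adj.2 hadj.symm]
      · have h1 := SimpleGraph.dist_le q
        have h2 := hT.dist_triangle (u := v) (v := b) (w := ρ)
        have h3 := SimpleGraph.dist_eq_one_iff_adj.2 hadj
        simp only [SimpleGraph.Walk.length_cons] at hw
        rw [SimpleGraph.dist_comm (u := ρ) (v := b), SimpleGraph.dist_comm (u := ρ) (v := v)]
        omega
  choose p hp1 hp2 using hp
  have hd : ∀ v j, T.dist (p^[j] v) v ≤ j := by
    intro v j
    induction j with
    | zero => simp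
    | succ j ih =>
      rw [Function.iterate_succ_apply']
      have h2 := hT.dist_triangle (u := p (p^[j] v)) (v := p^[j] v) (w := v)
      have h3 := hp1 (p^[j] v)
      omega
  have hr : ∀ v j, T.dist ρ (p^[j] v) = T.dist ρ v - j := by
    intro v j
    induction j with
    | zero => simp
    | succ j ih =>
      rw [Function.iterate_succ_apply', hp2, ih]
      omega
  set K := ⌈(Real.sqrt (8 * (n : ℝ) + 1) + 1) / 2⌉₊ with hK
  have hle : (Real.sqrt (8 * (n : ℝ) + 1) + 1) / 2 ≤ K := Nat.le_ceil _
  have hs0 := Real.sqrt_nonneg (8 * (n : ℝ) + 1)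
  have hs := Real.sq_sqrt (show (0 : ℝ) ≤ 8 * (n : ℝ) + 1 by positivity)
  have hK0 : 0 < K := by
    rw [hK, Nat.ceil_pos]; linarith
  have hKn : 2 * n ≤ K * (K + 1) := by
    have : (2 * n : ℝ) ≤ K * (K + 1) := by nlinarith
    exact_mod_cast this
  obtain ⟨x, hx⟩ := burn_aux T ρ p hd hr K Finset.univ (fun _ _ => Finset.mem_univ _)
    (by rw [Finset.card_univ, ← hn]; exact hKn)
  apply Nat.sInf_le
  refine ⟨hK0, fun i => x (K - 1 - i), fun v => ?_⟩
  obtain ⟨i, hi, hiv⟩ := hx v (Finset.mem_univ _)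
  refine ⟨⟨K - 1 - i, by omega⟩, ?_⟩
  have : K - 1 - (K - 1 - i) = i := by omega
  simpa only [this] using hiv
end
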